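/- arXiv:1902.09830 — 2 statements merged into one kernel-verified Lean document; each statement's English description precedes it below -/
import Mathlib

section
/- For every positive integer k there exist constants C, D > 0 depending only on k with the following property: for every finite field 𝔽, all finite-dimensional 𝔽-vector spaces G_1, …, G_k, and every multilinear form α : G_1 × ⋯ × G_k → 𝔽, the partition rank of α satisfies prank(α) ≤ C·(arank(α)^D + 1). -/
/-!
View the form as a system `T` of forms in one argument fewer, the removed argument being the output
coordinate. The bias of the form is the density of the zero set of `T`.

Over a field that is large compared with the codimension `c` of the zero set, most zeros of `T` have
slices of rank at most `c`, and moving one argument within the zero set does not increase these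
ranks. Start from such a zero and move its arguments one after the other by generic solutions of the
linear equations given by the current slice. Cramer's rule writes these solutions as polynomials,
and by the Schwartz–Zippel lemma and Markov's inequality the resulting polynomial path stays in the
zero set. Its `i`-th argument is a pivot minor times a generic vector, up to a combination of at
most `c + 1` constant vectors, so that comparing the multilinear coefficients in `T (path) = 0`
expresses `T` as a sum of at most `(c + 2) ^ d` products, where `d` is the number of arguments of
`T`.

Over a small field, pass to an extension of degree `m` about the analytic rank. Convexity bounds the
density of the zero set over the extension from below by the `m ^ d`-th power of the original
density, and taking coordinates in a basis of the extension brings a decomposition back, at the cost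
of a factor `m`.
-/

namespace PartitionRank

open Finset Matrix

/-! ### Minors and kernels of matrices -/

section Minors

variable {K m n p : Type*} [Field K]

theorem exists_linearIndependent_col_comp [Fintype n] (M : Matrix m n K) {s : ℕ}
    (hs : s ≤ M.rank) : ∃ c : Fin s → n, LinearIndependent K (M.col ∘ c) := by
  obtain ⟨κ, a, ha, hspan, hli⟩ := exists_linearIndependent' K M.col
  have : Finite κ := Finite.of_injective a ha
  have : Fintype κ := Fintype.ofFinite κ
  have hcard : Fintype.card κ = M.rank := by
    rw [Matrix.rank_eq_finrank_span_cols, ← hspan, finrank_span_eq_card hli]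
  let e : Fin s ↪ κ :=
    (Fin.castLEEmb (hs.trans hcard.ge)).trans (Fintype.equivFin κ).symm.toEmbedding
  exact ⟨a ∘ e, hli.comp e e.injective⟩

theorem exists_submatrix_det_ne_zero [Finite m] [Fintype n] (M : Matrix m n K) {s : ℕ}
    (hs : s ≤ M.rank) : ∃ (r : Fin s → m) (c : Fin s → n), (M.submatrix r c).det ≠ 0 := by
  have : Fintype m := Fintype.ofFinite m
  obtain ⟨c, hc⟩ := exists_linearIndependent_col_comp M hs
  have hrank : (M.submatrix id c)ᵀ.rank = s := by
    have hrow : LinearIndependent K (M.submatrix id c)ᵀ.row := hc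
    simpa only [Fintype.card_fin] using hrow.rank_matrix
  obtain ⟨r, hr⟩ := exists_linearIndependent_col_comp _ hrank.ge
  have hrow : LinearIndependent K (M.submatrix r c).row := hr
  rw [Matrix.linearIndependent_rows_iff_isUnit, Matrix.isUnit_iff_isUnit_det] at hrow
  exact ⟨r, c, hrow.ne_zero⟩

theorem card_le_rank_of_submatrix_det_ne_zero [Finite m] [Fintype n] [Fintype p]
    [DecidableEq p] {M : Matrix m n K} {r : p → m} {c : p → n}
    (h : (M.submatrix r c).det ≠ 0) : Fintype.card p ≤ M.rank := by
  have : Fintype m := Fintype.ofFinite m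
  rw [← Matrix.rank_of_det_ne_zero h]
  exact Matrix.rank_submatrix_le M r c

theorem exists_eq_mul_submatrix_of_det_ne_zero [Finite m] [Fintype n] [Fintype p] [DecidableEq p]
    {M : Matrix m n K} {r : p → m} {c : p → n} (h : (M.submatrix r c).det ≠ 0)
    (hrank : M.rank ≤ Fintype.card p) : ∃ B : Matrix m p K, M = B * M.submatrix r id := by
  have hli : LinearIndependent K (M.row ∘ r) := by
    have hrow : LinearIndependent K (LinearMap.funLeft K K c ∘ M.row ∘ r) := by
      change LinearIndependent K (M.submatrix r c).row
      rw [Matrix.linearIndependent_rows_iff_isUnit, Matrix.isUnit_iff_isUnit_det]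
      exact h.isUnit
    exact hrow.of_comp _
  have hspan : Submodule.span K (Set.range (M.row ∘ r)) = Submodule.span K (Set.range M.row) := by
    apply Submodule.eq_of_le_of_finrank_le (Submodule.span_mono (Set.range_comp_subset_range _ _))
    rwa [← Matrix.rank_eq_finrank_span_row, finrank_span_eq_card hli]
  have hcoeff : ∀ i, ∃ b : p → K, ∑ a, b a • M.row (r a) = M.row i := fun i => by
    have hmem : M.row i ∈ Submodule.span K (Set.range (M.row ∘ r)) :=
      hspan ▸ Submodule.subset_span ⟨i, rfl⟩
    simpa only [Function.comp_apply] using (Submodule.mem_span_range_iff_exists_fun K).1 hmem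
  choose B hB using hcoeff
  refine ⟨of B, Matrix.ext fun i j => ?_⟩
  simpa [Matrix.mul_apply] using (congrFun (hB i) j).symm

end Minors

section CramerKernel

variable {R m n p : Type*} [CommRing R] [DecidableEq n] [Fintype p] [DecidableEq p]

/-- Cramer's rule as a matrix: with pivot rows `r` and pivot columns `c`, every column of
`cramerKernel M r c` solves the equations of `M` indexed by `r`, and on the kernel of `M` this
matrix is multiplication by the pivot minor. No division occurs, so that it makes sense for
matrices of polynomials. -/
def cramerKernel (M : Matrix m n R) (r : p → m) (c : p → n) : Matrix n n R :=
  (M.submatrix r c).det • 1 -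
    (1 : Matrix n n R).submatrix id c * (M.submatrix r c).adjugate * M.submatrix r id

theorem submatrix_mul_cramerKernel [Fintype n] (M : Matrix m n R) (r : p → m) (c : p → n) :
    M.submatrix r id * cramerKernel M r c = 0 := by
  have hcol : M.submatrix r id * (1 : Matrix n n R).submatrix id c = M.submatrix r c := by
    rw [← Matrix.submatrix_mul _ _ r id c Function.bijective_id, Matrix.mul_one]
  rw [cramerKernel, Matrix.mul_sub, ← Matrix.mul_assoc, ← Matrix.mul_assoc, hcol,
    Matrix.mul_adjugate, Matrix.mul_smul, Matrix.smul_mul, Matrix.mul_one, Matrix.one_mul, sub_self]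

theorem cramerKernel_mulVec [Fintype n] (M : Matrix m n R) (r : p → m) (c : p → n) (y : n → R) :
    cramerKernel M r c *ᵥ y = (M.submatrix r c).det • y -
      ∑ a, ((M.submatrix r c).adjugate *ᵥ (M.submatrix r id *ᵥ y)) a • Pi.single (c a) 1 := by
  have hcol : ∀ z : p → R, (1 : Matrix n n R).submatrix id c *ᵥ z =
      ∑ a, z a • Pi.single (c a) 1 := fun z => by
    ext l
    simp [Matrix.mulVec, dotProduct, Matrix.one_apply, Pi.single_apply]
  rw [cramerKernel, Matrix.sub_mulVec, ← Matrix.mulVec_mulVec, ← Matrix.mulVec_mulVec, hcol,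
    Matrix.smul_mulVec, Matrix.one_mulVec]

theorem cramerKernel_mulVec_of_mulVec_eq_zero [Fintype n] {M : Matrix m n R} (r : p → m) (c : p → n)
    {y : n → R} (hy : M *ᵥ y = 0) : cramerKernel M r c *ᵥ y = (M.submatrix r c).det • y := by
  have hrow : M.submatrix r id *ᵥ y = 0 := funext fun a => congrFun hy (r a)
  simp [cramerKernel_mulVec, hrow]

theorem cramerKernel_map {S : Type*} [CommRing S] (φ : R →+* S) (M : Matrix m n R) (r : p → m)
    (c : p → n) : (cramerKernel M r c).map φ = cramerKernel (M.map φ) r c := by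
  have hdet : φ (M.submatrix r c).det = ((M.map φ).submatrix r c).det := φ.map_det _
  have hadj : (M.submatrix r c).adjugate.map φ = ((M.map φ).submatrix r c).adjugate :=
    φ.map_adjugate _
  have hone : (1 : Matrix n n R).map φ = 1 := Matrix.map_one φ φ.map_zero φ.map_one
  rw [cramerKernel, cramerKernel, Matrix.map_sub _ (map_sub φ), Matrix.map_mul, Matrix.map_mul,
    hadj, ← Matrix.submatrix_map, ← Matrix.submatrix_map, Matrix.map_smul' φ _ _ (map_mul φ), hdet,
    hone]

theorem mul_cramerKernel_eq_zero {K : Type*} [Field K] [Finite m] [Fintype n]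
    {M : Matrix m n K} {r : p → m} {c : p → n} (h : (M.submatrix r c).det ≠ 0)
    (hrank : M.rank ≤ Fintype.card p) : M * cramerKernel M r c = 0 := by
  obtain ⟨B, hB⟩ := exists_eq_mul_submatrix_of_det_ne_zero h hrank
  calc M * cramerKernel M r c = B * (M.submatrix r id * cramerKernel M r c) := by
        rw [← Matrix.mul_assoc, ← hB]
    _ = 0 := by rw [submatrix_mul_cramerKernel, Matrix.mul_zero]

end CramerKernel

/-! ### Counting over finite fields -/

section Counting

open scoped Classical

theorem card_filter_mem_mul_card_range_le {K V W : Type*} [Ring K] [AddCommGroup V] [Module K V]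
    [Fintype V] [AddCommGroup W] [Module K W] (L : V →ₗ[K] W) (S : Finset W) :
    #{v | L v ∈ S} * Nat.card (LinearMap.range L) ≤ #S * Fintype.card V := by
  have hfibre : ∀ w, #{v | L v = w} ≤ #{v | L v = 0} := fun w => by
    rcases em (w ∈ Set.range L) with hw | hw
    · exact (AddMonoidHom.card_fiber_eq_of_mem_range L hw ⟨0, map_zero L⟩).le
    · rw [Finset.card_eq_zero.2 (filter_eq_empty_iff.2 fun v _ hv => hw ⟨v, hv⟩)]
      exact Nat.zero_le _
  have hker : #{v | L v = 0} * Nat.card (LinearMap.range L) = Fintype.card V := by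
    have hcard : #{v | L v = 0} = Nat.card (LinearMap.ker L) := by
      rw [← Fintype.card_subtype, ← Nat.card_eq_fintype_card]
      rfl
    rw [hcard, Nat.card_congr L.quotKerEquivRange.toEquiv.symm, ← Nat.card_eq_fintype_card,
      Submodule.card_eq_card_quotient_mul_card (LinearMap.ker L)]
  have hmem : #{v | L v ∈ S} ≤ #S * #{v | L v = 0} := by
    rw [mul_comm]
    refine card_le_mul_card_image_of_maps_to (f := L) (fun v hv => (mem_filter.1 hv).2) _ ?_
    exact fun w _ => (card_le_card (filter_subset_filter _ (subset_univ _))).trans (hfibre w)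
  calc #{v | L v ∈ S} * Nat.card (LinearMap.range L)
      ≤ #S * #{v | L v = 0} * Nat.card (LinearMap.range L) := Nat.mul_le_mul_right _ hmem
    _ = #S * Fintype.card V := by rw [mul_assoc, hker]

variable {K V : Type*} [Field K] [Fintype K] [AddCommGroup V] [Module K V] [Fintype V]

theorem card_pow_rank_mul_card_ker {m n : Type*} [Fintype m] [Fintype n] [DecidableEq n]
    (M : Matrix m n K) :
    Fintype.card K ^ M.rank * #{y | M *ᵥ y = 0} = Fintype.card (n → K) := by
  have hker : #{y | M *ᵥ y = 0} =
      Fintype.card K ^ Module.finrank K (LinearMap.ker M.mulVecLin) := by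
    rw [← Module.card_eq_pow_finrank, Fintype.card_subtype]
    simp only [LinearMap.mem_ker, Matrix.mulVecLin_apply]
  rw [hker, ← pow_add, Module.card_eq_pow_finrank (K := K) (V := n → K),
    ← LinearMap.finrank_range_add_finrank_ker M.mulVecLin, Matrix.rank]

theorem card_filter_det_smul_add_eq_zero_le {p : Type*} [Fintype p] [DecidableEq p]
    {A B : Matrix p p K} (hA : A.det ≠ 0) :
    #{t : K | (t • A + B).det = 0} ≤ Fintype.card p := by
  let P : Polynomial K :=
    ((Polynomial.X : Polynomial K) • A.map Polynomial.C + B.map Polynomial.C).det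
  have hP : P ≠ 0 := fun h => hA <| by
    rw [← Polynomial.coeff_det_X_add_C_card A B]
    exact congrArg (Polynomial.coeff · _) h
  have heval : ∀ t, P.eval t = (t • A + B).det := fun t => by
    rw [← Polynomial.coe_evalRingHom, RingHom.map_det]
    congr 1
    ext i j
    simpa using mul_comm _ _
  calc #{t : K | (t • A + B).det = 0} ≤ #P.roots.toFinset := card_le_card fun t ht => by
        rw [Multiset.mem_toFinset, Polynomial.mem_roots hP, Polynomial.IsRoot, heval]
        exact (mem_filter.1 ht).2
    _ ≤ P.natDegree := (Multiset.toFinset_card_le _).trans P.card_roots'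
    _ ≤ Fintype.card p := Polynomial.natDegree_det_X_add_C_le A B

theorem card_mul_card_filter_det_eq_zero_le {p : Type*} [Fintype p] [DecidableEq p]
    (A : V →ₗ[K] Matrix p p K) {y : V} (hy : (A y).det ≠ 0) :
    Fintype.card K * #{v | (A v).det = 0} ≤ Fintype.card p * Fintype.card V := by
  have htranslate : ∀ t : K, #{v | (A v).det = 0} = #{v | (t • A y + A v).det = 0} := fun t => by
    refine (card_equiv (Equiv.addLeft (t • y)) fun v => ?_).symm
    simp only [mem_filter, mem_univ, true_and, Equiv.coe_addLeft, map_add, map_smul]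
  calc Fintype.card K * #{v | (A v).det = 0}
      = ∑ t : K, #{v | (t • A y + A v).det = 0} := by
        rw [← sum_congr rfl fun t _ => htranslate t, sum_const, card_univ, smul_eq_mul]
    _ = ∑ v, #{t : K | (t • A y + A v).det = 0} :=
        sum_card_bipartiteAbove_eq_sum_card_bipartiteBelow _
    _ ≤ ∑ _v : V, Fintype.card p := sum_le_sum fun v _ => card_filter_det_smul_add_eq_zero_le hy
    _ = Fintype.card p * Fintype.card V := by
        rw [sum_const, card_univ, smul_eq_mul, mul_comm]

theorem card_mul_card_filter_rank_lt_le {m n : Type*} [Finite m] [Fintype n]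
    (A : V →ₗ[K] Matrix m n K) (c : ℕ) :
    Fintype.card K * #{v | (A v).rank ≤ c ∧ ∃ y, (A v).rank < (A y).rank} ≤
      (c + 1) * Fintype.card V := by
  obtain ⟨y, -, hmax⟩ := exists_max_image univ (fun y => min (A y).rank (c + 1)) univ_nonempty
  obtain ⟨r, s, hdet⟩ := exists_submatrix_det_ne_zero (A y) (min_le_left _ (c + 1))
  let minor : Matrix m n K →ₗ[K] Matrix _ _ K :=
    { toFun := fun M => M.submatrix r s, map_add' := fun _ _ => rfl, map_smul' := fun _ _ => rfl }
  have hsubset : #{v | (A v).rank ≤ c ∧ ∃ y, (A v).rank < (A y).rank} ≤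
      #{v | ((minor ∘ₗ A) v).det = 0} := by
    refine card_le_card (monotone_filter_right _ fun v _ hv => ?_)
    obtain ⟨hle, z, hz⟩ := hv
    by_contra hne
    have hrank := card_le_rank_of_submatrix_det_ne_zero (M := A v) (r := r) (c := s) hne
    have hz' := hmax z (mem_univ z)
    rw [Fintype.card_fin] at hrank
    omega
  calc _ ≤ Fintype.card K * #{v | ((minor ∘ₗ A) v).det = 0} := Nat.mul_le_mul_left _ hsubset
    _ ≤ Fintype.card (Fin (min (A y).rank (c + 1))) * Fintype.card V :=
        card_mul_card_filter_det_eq_zero_le (minor ∘ₗ A) hdet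
    _ ≤ (c + 1) * Fintype.card V := by
        rw [Fintype.card_fin]
        exact Nat.mul_le_mul_right _ (min_le_right _ _)

theorem card_mul_card_filter_eval_eq_zero_le {σ : Type*} [Fintype σ] [DecidableEq σ]
    {P : MvPolynomial σ K} (hP : P ≠ 0) :
    Fintype.card K * #{u | MvPolynomial.eval u P = 0} ≤ P.totalDegree * Fintype.card (σ → K) := by
  let e := Fintype.equivFin σ
  let Q := MvPolynomial.rename e P
  have hQ : Q ≠ 0 := (map_ne_zero_iff _ (MvPolynomial.rename_injective e e.injective)).2 hP
  have hzeros : #{u | MvPolynomial.eval u P = 0} = #{f | MvPolynomial.eval f Q = 0} :=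
    card_equiv (e.arrowCongr (Equiv.refl K)) fun u => by
      simp [Q, MvPolynomial.eval_rename, Function.comp_def]
  have hdeg : (Q.totalDegree : NNRat) ≤ P.totalDegree :=
    Nat.cast_le.2 (MvPolynomial.totalDegree_rename_le e P)
  have hSZ := MvPolynomial.schwartz_zippel_totalDegree hQ (univ : Finset K)
  have hq : (0 : NNRat) < Fintype.card K := Nat.cast_pos.2 Fintype.card_pos
  rw [Fintype.piFinset_univ, card_univ, ← hzeros, div_le_div_iff₀ (pow_pos hq _) hq] at hSZ
  rw [Fintype.card_fun, ← Nat.cast_le (α := NNRat)]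
  push_cast
  calc (Fintype.card K : NNRat) * #{u | MvPolynomial.eval u P = 0}
      ≤ Q.totalDegree * (Fintype.card K : NNRat) ^ Fintype.card σ := by rwa [mul_comm]
    _ ≤ P.totalDegree * (Fintype.card K : NNRat) ^ Fintype.card σ := by gcongr

end Counting

/-! ### Tensors and their slices -/

section Tensor

variable {K η κ : Type*} {ι : η → Type*} [CommRing K] [Fintype η] [DecidableEq η]
  [∀ i, Fintype (ι i)] {R S : Type*} [CommRing R] [Algebra K R] [CommRing S] [Algebra K S]

/-- The multilinear map over the `K`-algebra `R` whose coefficient array is `T`. The array is kept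
over `K`, so that it can be evaluated over `K`, over polynomial rings and over extension fields. -/
noncomputable def tensorMap (R : Type*) [CommRing R] [Algebra K R] (T : (∀ i, ι i) → κ → K) :
    MultilinearMap R (fun i => ι i → R) (κ → R) :=
  MultilinearMap.pi fun w => ∑ j : ∀ i, ι i, algebraMap K R (T j w) •
    (MultilinearMap.mkPiAlgebra R η R).compLinearMap fun i => LinearMap.proj (j i)

theorem tensorMap_apply (T : (∀ i, ι i) → κ → K) (x : ∀ i, ι i → R) (w : κ) :
    tensorMap R T x w = ∑ j : ∀ i, ι i, algebraMap K R (T j w) * ∏ i, x i (j i) := by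
  simp [tensorMap]

theorem tensorMap_map (φ : R →ₐ[K] S) (T : (∀ i, ι i) → κ → K) (x : ∀ i, ι i → R) :
    tensorMap S T (fun i => φ ∘ x i) = φ ∘ tensorMap R T x := by
  ext w
  simp [tensorMap_apply, map_sum, map_prod]

variable [∀ i, DecidableEq (ι i)]

/-- The matrix of the linear map obtained from the tensor `T` by freeing the `i`-th argument and
fixing the others at `x`. -/
noncomputable def slice (T : (∀ i, ι i) → κ → K) (x : ∀ i, ι i → R) (i : η) : Matrix κ (ι i) R :=
  LinearMap.toMatrix' ((tensorMap R T).toLinearMap x i)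

theorem slice_apply (T : (∀ i, ι i) → κ → K) (x : ∀ i, ι i → R) (i : η) (w : κ) (l : ι i) :
    slice T x i w l = tensorMap R T (Function.update x i (Pi.single l 1)) w :=
  LinearMap.toMatrix'_apply _ _ _

theorem slice_mulVec (T : (∀ i, ι i) → κ → K) (x : ∀ i, ι i → R) (i : η) (y : ι i → R) :
    slice T x i *ᵥ y = tensorMap R T (Function.update x i y) :=
  LinearMap.toMatrix'_mulVec _ _

theorem slice_mulVec_self (T : (∀ i, ι i) → κ → K) (x : ∀ i, ι i → R) (i : η) :
    slice T x i *ᵥ x i = tensorMap R T x := by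
  rw [slice_mulVec, Function.update_eq_self]

theorem slice_update_self (T : (∀ i, ι i) → κ → K) (x : ∀ i, ι i → R) (i : η) (y : ι i → R) :
    slice T (Function.update x i y) i = slice T x i := by
  ext w l
  rw [slice_apply, slice_apply, Function.update_idem]

theorem slice_map (φ : R →ₐ[K] S) (T : (∀ i, ι i) → κ → K) (x : ∀ i, ι i → R) (i : η) :
    (slice T x i).map φ = slice T (fun j => φ ∘ x j) i := by
  ext w l
  have hupdate : Function.update (fun j => φ ∘ x j) i (Pi.single l 1) =
      fun j => φ ∘ Function.update x i (Pi.single l 1) j := by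
    funext j
    rw [Function.apply_update (fun j (y : ι j → R) => φ ∘ y)]
    congr
    ext a
    simp [Pi.single_apply, apply_ite φ]
  rw [Matrix.map_apply, slice_apply, slice_apply, hupdate, tensorMap_map, Function.comp_apply]

/-- The slice in direction `j`, as a linear function of the `i`-th argument of the tensor. -/
noncomputable def sliceLinearMap (T : (∀ i, ι i) → κ → K) (x : ∀ i, ι i → R) {i j : η}
    (hij : i ≠ j) : (ι i → R) →ₗ[R] Matrix κ (ι j) R where
  toFun y := slice T (Function.update x i y) j
  map_add' y z := by
    ext w l
    simp only [Matrix.add_apply, slice_apply, Function.update_comm hij,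
      MultilinearMap.map_update_add, Pi.add_apply]
  map_smul' t y := by
    ext w l
    simp only [Matrix.smul_apply, slice_apply, Function.update_comm hij,
      MultilinearMap.map_update_smul, Pi.smul_apply, RingHom.id_apply]

end Tensor

/-! ### A polynomial path in the zero set -/

section Path

/-- Rows and columns selecting, in every direction `i`, a square submatrix of size `size i` of the
slice in direction `i`. -/
structure Pivots {d : ℕ} (ι : Fin d → Type*) (κ : Type*) where
  size : Fin d → ℕ
  row : ∀ i, Fin (size i) → κ
  col : ∀ i, Fin (size i) → ι i

variable {K κ : Type*} {d : ℕ} {ι : Fin d → Type*} [CommRing K] [∀ i, Fintype (ι i)]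
  [∀ i, DecidableEq (ι i)] {R S : Type*} [CommRing R] [Algebra K R] [CommRing S] [Algebra K S]

/-- The path obtained from `x₀` by moving the arguments `0, 1, …, d - 1` in turn: the `i`-th one
is moved by the image of `u i` under the Cramer matrix of the current slice in direction `i`. As
long as the pivots compute the rank of that slice, the path stays in the zero set of the tensor. -/
noncomputable def path (T : (∀ i, ι i) → κ → K) (P : Pivots ι κ) (x₀ : ∀ i, ι i → K)
    (u : ∀ i, ι i → R) : Fin (d + 1) → ∀ i, ι i → R :=
  Fin.induction (fun i => algebraMap K R ∘ x₀ i) fun i x =>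
    Function.update x i (x i + cramerKernel (slice T x i) (P.row i) (P.col i) *ᵥ u i)

/-- The Cramer matrix used by `path` to move the `i`-th argument. -/
noncomputable def pathKernel (T : (∀ i, ι i) → κ → K) (P : Pivots ι κ) (x₀ : ∀ i, ι i → K)
    (u : ∀ i, ι i → R) (i : Fin d) : Matrix (ι i) (ι i) R :=
  cramerKernel (slice T (path T P x₀ u i.castSucc) i) (P.row i) (P.col i)

/-- The pivot minor of the slice used by `path` to move the `i`-th argument. -/
noncomputable def pathMinor (T : (∀ i, ι i) → κ → K) (P : Pivots ι κ) (x₀ : ∀ i, ι i → K)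
    (u : ∀ i, ι i → R) (i : Fin d) : R :=
  ((slice T (path T P x₀ u i.castSucc) i).submatrix (P.row i) (P.col i)).det

variable (T : (∀ i, ι i) → κ → K) (P : Pivots ι κ) (x₀ : ∀ i, ι i → K)

theorem path_zero (u : ∀ i, ι i → R) : path T P x₀ u 0 = fun i => algebraMap K R ∘ x₀ i :=
  Fin.induction_zero _ _

theorem path_succ (u : ∀ i, ι i → R) (i : Fin d) :
    path T P x₀ u i.succ = Function.update (path T P x₀ u i.castSucc) i
      (path T P x₀ u i.castSucc i + pathKernel T P x₀ u i *ᵥ u i) :=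
  Fin.induction_succ _ _ _

theorem path_map (φ : R →ₐ[K] S) (u : ∀ i, ι i → R) (s : Fin (d + 1)) :
    path T P x₀ (fun i => φ ∘ u i) s = fun i => φ ∘ path T P x₀ u s i := by
  induction s using Fin.induction with
  | zero =>
    ext i l
    simp [path_zero]
  | succ i ih =>
    have hkernel : pathKernel T P x₀ (fun i => φ ∘ u i) i = (pathKernel T P x₀ u i).map φ := by
      rw [pathKernel, pathKernel, ih, ← slice_map φ]
      exact (cramerKernel_map φ.toRingHom _ _ _).symm
    have hmul : φ ∘ (pathKernel T P x₀ u i *ᵥ u i) = (pathKernel T P x₀ u i).map φ *ᵥ (φ ∘ u i) :=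
      funext fun l => φ.toRingHom.map_mulVec _ _ l
    funext j
    rw [path_succ, path_succ, Function.apply_update (fun j (y : ι j → R) => φ ∘ y), ih, hkernel,
      ← hmul]
    congr 2
    ext l
    exact (map_add φ _ _).symm

theorem pathMinor_map (φ : R →ₐ[K] S) (u : ∀ i, ι i → R) (i : Fin d) :
    pathMinor T P x₀ (fun i => φ ∘ u i) i = φ (pathMinor T P x₀ u i) := by
  rw [pathMinor, pathMinor, path_map, ← slice_map φ]
  exact (φ.toRingHom.map_det _).symm

theorem path_congr {u u' : ∀ i, ι i → R} {s : Fin (d + 1)}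
    (h : ∀ i : Fin d, i.castSucc < s → u i = u' i) : path T P x₀ u s = path T P x₀ u' s := by
  induction s using Fin.induction with
  | zero => rw [path_zero, path_zero]
  | succ i ih =>
    have hlt : i.castSucc < i.succ := Fin.castSucc_lt_succ
    rw [path_succ, path_succ, pathKernel, pathKernel, ih fun j hj => h j (hj.trans hlt), h i hlt]

theorem path_apply_of_le (u : ∀ i, ι i → R) {s : Fin (d + 1)} {i : Fin d} (h : s ≤ i.castSucc) :
    path T P x₀ u s i = algebraMap K R ∘ x₀ i := by
  induction s using Fin.induction with
  | zero => rw [path_zero]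
  | succ j ih =>
    have hlt : j.castSucc < i.castSucc := Fin.castSucc_lt_succ.trans_le h
    rw [path_succ, Function.update_of_ne (Fin.castSucc_lt_castSucc_iff.1 hlt).ne', ih hlt.le]

theorem path_apply_of_lt (u : ∀ i, ι i → R) {s : Fin (d + 1)} {i : Fin d} (h : i.castSucc < s) :
    path T P x₀ u s i = algebraMap K R ∘ x₀ i + pathKernel T P x₀ u i *ᵥ u i := by
  induction s using Fin.induction with
  | zero => exact absurd h (Fin.not_lt_zero _)
  | succ j ih =>
    rw [path_succ]
    rcases (Fin.castSucc_lt_succ_iff.1 h).eq_or_lt with rfl | hlt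
    · rw [Function.update_self, path_apply_of_le T P x₀ u le_rfl]
    · rw [Function.update_of_ne hlt.ne, ih (Fin.castSucc_lt_castSucc_iff.2 hlt)]

theorem path_of_eq_zero (s : Fin (d + 1)) :
    path T P x₀ (0 : ∀ i, ι i → R) s = fun i => algebraMap K R ∘ x₀ i := by
  funext i
  rcases le_or_gt s i.castSucc with h | h
  · exact path_apply_of_le T P x₀ 0 h
  · rw [path_apply_of_lt T P x₀ 0 h, Pi.zero_apply, Matrix.mulVec_zero, add_zero]

end Path

/-! ### Counting zeros of a tensor -/

theorem mul_card_le_mul_card_of_fiberwise {η : Type*} {X : η → Type*} [Fintype η] [DecidableEq η]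
    [∀ i, Fintype (X i)] [∀ i, DecidableEq (X i)] (i : η) [Nonempty (X i)]
    {B Z : Finset (∀ i, X i)} {a b : ℕ}
    (h : ∀ x, a * #{v | Function.update x i v ∈ B} ≤ b * #{v | Function.update x i v ∈ Z}) :
    a * #B ≤ b * #Z := by
  have hswap : Function.Involutive fun p : (∀ i, X i) × X i => (Function.update p.1 i p.2, p.1 i) :=
    fun p => by simp
  have hcount : ∀ S : Finset (∀ i, X i),
      ∑ x, #{v | Function.update x i v ∈ S} = Fintype.card (X i) * #S := fun S => by
    calc ∑ x, #{v | Function.update x i v ∈ S}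
        = ∑ p : (∀ i, X i) × X i, if Function.update p.1 i p.2 ∈ S then 1 else 0 := by
          simp only [card_filter, Fintype.sum_prod_type]
      _ = ∑ p : (∀ i, X i) × X i, if p.1 ∈ S then 1 else 0 :=
          Equiv.sum_comp hswap.toPerm fun p : (∀ i, X i) × X i => if p.1 ∈ S then 1 else 0
      _ = Fintype.card (X i) * #S := by
          rw [Fintype.sum_prod_type_right]
          simp only [sum_const, card_univ, smul_eq_mul, ← card_filter, filter_univ_mem]
  refine Nat.le_of_mul_le_mul_left ?_ (Fintype.card_pos (α := X i))
  calc Fintype.card (X i) * (a * #B) = ∑ x, a * #{v | Function.update x i v ∈ B} := by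
        rw [← mul_sum, hcount, mul_left_comm]
    _ ≤ ∑ x, b * #{v | Function.update x i v ∈ Z} := sum_le_sum fun x _ => h x
    _ = Fintype.card (X i) * (b * #Z) := by rw [← mul_sum, hcount, mul_left_comm]

section ZeroSet

open scoped Classical

variable {K η κ : Type*} {ι : η → Type*} [Field K] [Fintype K] [Fintype η] [DecidableEq η]
  [∀ i, Fintype (ι i)] [∀ i, DecidableEq (ι i)] (T : (∀ i, ι i) → κ → K)

/-- The common zeros of all components of the tensor `T`. -/
noncomputable def zeroSet : Finset (∀ i, ι i → K) :=
  {x | tensorMap K T x = 0}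

variable {T}

theorem mem_zeroSet {x : ∀ i, ι i → K} : x ∈ zeroSet T ↔ tensorMap K T x = 0 := by
  rw [zeroSet, mem_filter, and_iff_right (mem_univ x)]

theorem update_mem_zeroSet {x : ∀ i, ι i → K} {i : η} {y : ι i → K} :
    Function.update x i y ∈ zeroSet T ↔ slice T x i *ᵥ y = 0 := by
  rw [mem_zeroSet, slice_mulVec]

theorem card_filter_update_mem_zeroSet (x : ∀ i, ι i → K) (i : η) :
    #{v | Function.update x i v ∈ zeroSet T} =
      Fintype.card (LinearMap.ker (slice T x i).mulVecLin) := by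
  simp only [Fintype.card_subtype, update_mem_zeroSet, LinearMap.mem_ker, Matrix.mulVecLin_apply]

variable (T)

/-- The zeros at which the slice in direction `j` has rank at most `c`, but where this rank can be
increased by moving the `i`-th argument within the zero set. -/
noncomputable def rankJumpSet (c : ℕ) (i j : η) : Finset (∀ i, ι i → K) :=
  {x | x ∈ zeroSet T ∧ (slice T x j).rank ≤ c ∧ ∃ y, Function.update x i y ∈ zeroSet T ∧
    (slice T x j).rank < (slice T (Function.update x i y) j).rank}

theorem card_mul_card_rankJumpSet_le [Finite κ] (c : ℕ) (i j : η) :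
    Fintype.card K * #(rankJumpSet T c i j) ≤ (c + 1) * #(zeroSet T) := by
  rcases eq_or_ne i j with rfl | hij
  · have hempty : rankJumpSet T c i i = ∅ := filter_eq_empty_iff.2 fun x _ hx => by
      obtain ⟨-, -, y, -, hlt⟩ := hx
      exact hlt.ne (by rw [slice_update_self])
    simp only [hempty, card_empty, mul_zero, Nat.zero_le]
  refine mul_card_le_mul_card_of_fiberwise i fun x => ?_
  let N := LinearMap.ker (slice T x i).mulVecLin
  have hN : ∀ v, v ∈ N ↔ Function.update x i v ∈ zeroSet T := fun v => update_mem_zeroSet.symm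
  let A : N →ₗ[K] Matrix κ (ι j) K := sliceLinearMap T x hij ∘ₗ N.subtype
  have hfibre : #{v | Function.update x i v ∈ rankJumpSet T c i j} ≤
      #{v | (A v).rank ≤ c ∧ ∃ y, (A v).rank < (A y).rank} := by
    rw [← card_map (Function.Embedding.subtype _)]
    refine card_le_card fun v hv => ?_
    obtain ⟨hv, hrank, y, hy, hlt⟩ := (mem_filter.1 (mem_filter.1 hv).2).2
    rw [Function.update_idem] at hy hlt
    exact mem_map.2 ⟨⟨v, (hN v).2 hv⟩, mem_filter.2 ⟨mem_univ _, hrank, ⟨y, (hN y).2 hy⟩, hlt⟩, rfl⟩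
  rw [card_filter_update_mem_zeroSet]
  exact (Nat.mul_le_mul_left _ hfibre).trans (card_mul_card_filter_rank_lt_le A c)

/-- The zeros at which moving one argument within the zero set increases the rank of a slice of rank
at most `c`. -/
noncomputable def rankJumps (c : ℕ) : Finset (∀ i, ι i → K) :=
  univ.biUnion fun p : η × η => rankJumpSet T c p.1 p.2

theorem card_mul_card_rankJumps_le [Finite κ] (c : ℕ) :
    Fintype.card K * #(rankJumps T c) ≤ Fintype.card η ^ 2 * (c + 1) * #(zeroSet T) := by
  calc Fintype.card K * #(rankJumps T c)
      ≤ Fintype.card K * ∑ p : η × η, #(rankJumpSet T c p.1 p.2) :=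
        Nat.mul_le_mul_left _ card_biUnion_le
    _ ≤ ∑ _p : η × η, (c + 1) * #(zeroSet T) := by
        rw [mul_sum]
        exact sum_le_sum fun p _ => card_mul_card_rankJumpSet_le T c p.1 p.2
    _ = Fintype.card η ^ 2 * (c + 1) * #(zeroSet T) := by
        rw [sum_const, card_univ, Fintype.card_prod, smul_eq_mul, sq]
        simp only [mul_assoc]

variable {T} in
theorem rank_slice_update_le_of_notMem_rankJumps {c : ℕ} {x : ∀ i, ι i → K} (hx : x ∈ zeroSet T)
    (hjump : x ∉ rankJumps T c) {i : η} {y : ι i → K} (hy : Function.update x i y ∈ zeroSet T)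
    {j : η} (hrank : (slice T x j).rank ≤ c) :
    (slice T (Function.update x i y) j).rank ≤ (slice T x j).rank := by
  by_contra! hlt
  exact hjump (mem_biUnion.2 ⟨(i, j), mem_univ _, mem_filter.2 ⟨mem_univ _, hx, hrank, y, hy, hlt⟩⟩)

theorem card_pow_mul_card_filter_lt_rank_le [Finite κ] (c : ℕ) (j : η) :
    Fintype.card K ^ (c + 1) * #{x | x ∈ zeroSet T ∧ c < (slice T x j).rank} ≤
      Fintype.card (∀ i, ι i → K) := by
  have : Fintype κ := Fintype.ofFinite κ
  rw [← card_univ (α := ∀ i, ι i → K), ← one_mul #univ]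
  refine mul_card_le_mul_card_of_fiberwise j fun x => ?_
  simp only [mem_filter, mem_univ, true_and, slice_update_self, one_mul, filter_true, card_univ]
  rcases lt_or_ge c (slice T x j).rank with hlt | hge
  · calc Fintype.card K ^ (c + 1) *
          #{v | Function.update x j v ∈ zeroSet T ∧ c < (slice T x j).rank}
        ≤ Fintype.card K ^ (slice T x j).rank * #{v | slice T x j *ᵥ v = 0} :=
          Nat.mul_le_mul (Nat.pow_le_pow_right Fintype.card_pos hlt)
            (card_le_card (monotone_filter_right _ fun v _ hv => update_mem_zeroSet.1 hv.1))
      _ = Fintype.card (ι j → K) := card_pow_rank_mul_card_ker _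
  · simp only [hge.not_gt, and_false, filter_false, card_empty, mul_zero, Nat.zero_le]

/-- The zeros for which at least half of the zeros differing from them in the `i`-th argument only
lie in `E`. -/
noncomputable def markovSet (i : η) (E : Finset (∀ i, ι i → K)) : Finset (∀ i, ι i → K) :=
  {x | x ∈ zeroSet T ∧
    #{v | Function.update x i v ∈ zeroSet T} ≤ 2 * #{v | Function.update x i v ∈ E}}

theorem card_markovSet_le (i : η) (E : Finset (∀ i, ι i → K)) : #(markovSet T i E) ≤ 2 * #E := by
  rw [← one_mul #(markovSet T i E)]
  refine mul_card_le_mul_card_of_fiberwise i fun x => ?_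
  simp only [markovSet, mem_filter, mem_univ, true_and, Function.update_idem, one_mul]
  rcases le_or_gt #{v | Function.update x i v ∈ zeroSet T} (2 * #{v | Function.update x i v ∈ E})
    with hle | hgt
  · simp only [hle, and_true]
  · simp only [hgt.not_ge, and_false, filter_false, card_empty, Nat.zero_le]

end ZeroSet

section Exceptional

open scoped Classical

variable {K κ : Type*} {d : ℕ} {ι : Fin d → Type*} [Field K] [Fintype K]
  [∀ i, Fintype (ι i)] [∀ i, DecidableEq (ι i)] (T : (∀ i, ι i) → κ → K)

/-- Points which the path must avoid before its `s`-th step: those where a rank may jump, and those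
from which the next step is likely to end in `exceptional T c (s + 1)`. -/
noncomputable def exceptional (c : ℕ) : Fin (d + 1) → Finset (∀ i, ι i → K) :=
  Fin.reverseInduction (rankJumps T c) fun i E => rankJumps T c ∪ markovSet T i E

theorem exceptional_last (c : ℕ) : exceptional T c (Fin.last d) = rankJumps T c :=
  Fin.reverseInduction_last

theorem exceptional_castSucc (c : ℕ) (i : Fin d) :
    exceptional T c i.castSucc = rankJumps T c ∪ markovSet T i (exceptional T c i.succ) :=
  Fin.reverseInduction_castSucc _

theorem card_exceptional_le (c : ℕ) (s : Fin (d + 1)) :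
    #(exceptional T c s) ≤ 3 ^ (s.rev : ℕ) * #(rankJumps T c) := by
  induction s using Fin.reverseInduction with
  | last => rw [exceptional_last, Fin.rev_last, Fin.val_zero, pow_zero, one_mul]
  | cast i ih =>
    rw [Fin.rev_succ, Fin.val_castSucc] at ih
    rw [exceptional_castSucc, Fin.rev_castSucc, Fin.val_succ, pow_succ]
    have hunion := card_union_le (rankJumps T c) (markovSet T i (exceptional T c i.succ))
    have hmarkov := card_markovSet_le T i (exceptional T c i.succ)
    have hone : #(rankJumps T c) ≤ 3 ^ (i.rev : ℕ) * #(rankJumps T c) :=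
      Nat.le_mul_of_pos_left _ (by positivity)
    linarith

theorem exists_mem_zeroSet_notMem_exceptional [Finite κ] {c : ℕ}
    (hZ : Fintype.card (∀ i, ι i → K) ≤ Fintype.card K ^ c * #(zeroSet T))
    (hq : 3 ^ d * (d ^ 2 * (c + 1)) + d < Fintype.card K) :
    ∃ x ∈ zeroSet T, x ∉ exceptional T c 0 ∧ ∀ j, (slice T x j).rank ≤ c := by
  by_contra! hcon
  let q := Fintype.card K
  let highRank (j : Fin d) : Finset (∀ i, ι i → K) := {x | x ∈ zeroSet T ∧ c < (slice T x j).rank}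
  have hcover : zeroSet T ⊆ exceptional T c 0 ∪ univ.biUnion highRank := fun x hx => by
    by_cases hex : x ∈ exceptional T c 0
    · exact mem_union_left _ hex
    · obtain ⟨j, hj⟩ := hcon x hx hex
      exact mem_union_right _ (mem_biUnion.2 ⟨j, mem_univ _, mem_filter.2 ⟨mem_univ _, hx, hj⟩⟩)
  have hhigh : ∀ j, q * #(highRank j) ≤ #(zeroSet T) := fun j => by
    have h := (card_pow_mul_card_filter_lt_rank_le T c j).trans hZ
    rw [pow_succ, mul_assoc] at h
    exact Nat.le_of_mul_le_mul_left h (pow_pos Fintype.card_pos c)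
  have hexc : q * #(exceptional T c 0) ≤ 3 ^ d * (d ^ 2 * (c + 1)) * #(zeroSet T) := by
    calc q * #(exceptional T c 0) ≤ q * (3 ^ d * #(rankJumps T c)) :=
          Nat.mul_le_mul_left _ (by simpa using card_exceptional_le T c 0)
      _ ≤ 3 ^ d * (d ^ 2 * (c + 1) * #(zeroSet T)) := by
          rw [mul_left_comm]
          refine Nat.mul_le_mul_left _ ?_
          simpa only [Fintype.card_fin] using card_mul_card_rankJumps_le T c
      _ = 3 ^ d * (d ^ 2 * (c + 1)) * #(zeroSet T) := (mul_assoc _ _ _).symm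
  have htotal : q * #(zeroSet T) ≤ (3 ^ d * (d ^ 2 * (c + 1)) + d) * #(zeroSet T) := by
    calc q * #(zeroSet T) ≤ q * (#(exceptional T c 0) + ∑ j, #(highRank j)) :=
          Nat.mul_le_mul_left _ <| (card_le_card hcover).trans <| (card_union_le _ _).trans <|
            Nat.add_le_add_left card_biUnion_le _
      _ ≤ 3 ^ d * (d ^ 2 * (c + 1)) * #(zeroSet T) + ∑ _j : Fin d, #(zeroSet T) := by
          rw [mul_add, mul_sum]
          exact Nat.add_le_add hexc (sum_le_sum fun j _ => hhigh j)
      _ = (3 ^ d * (d ^ 2 * (c + 1)) + d) * #(zeroSet T) := by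
          rw [sum_const, card_univ, Fintype.card_fin, smul_eq_mul, add_mul]
  have hpos : 0 < #(zeroSet T) := Nat.pos_of_mul_pos_left (Fintype.card_pos.trans_le hZ)
  exact hq.not_ge (Nat.le_of_mul_le_mul_right htotal hpos)

end Exceptional

section TotalDegree

open MvPolynomial

section Matrix

variable {σ R m n p : Type*} [CommRing R]

theorem totalDegree_prod_le_card_mul (s : Finset m) {f : m → MvPolynomial σ R} {E : ℕ}
    (h : ∀ a ∈ s, (f a).totalDegree ≤ E) : (∏ a ∈ s, f a).totalDegree ≤ #s * E :=
  (totalDegree_finsetProd s f).trans (sum_le_card_nsmul s _ E h)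

theorem totalDegree_single_one [DecidableEq m] (a b : m) :
    ((Pi.single a 1 : m → MvPolynomial σ R) b).totalDegree = 0 := by
  rw [Pi.single_apply]
  split_ifs
  exacts [totalDegree_one, totalDegree_zero]

theorem totalDegree_mul_apply_le [Fintype n] {A : Matrix m n (MvPolynomial σ R)}
    {B : Matrix n p (MvPolynomial σ R)} {E F : ℕ} (hA : ∀ a b, (A a b).totalDegree ≤ E)
    (hB : ∀ a b, (B a b).totalDegree ≤ F) (a : m) (b : p) :
    ((A * B) a b).totalDegree ≤ E + F :=
  totalDegree_finsetSum_le fun l _ =>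
    (totalDegree_mul _ _).trans (Nat.add_le_add (hA a l) (hB l b))

theorem totalDegree_mulVec_le [Fintype n] {A : Matrix m n (MvPolynomial σ R)}
    {v : n → MvPolynomial σ R} {E F : ℕ} (hA : ∀ a b, (A a b).totalDegree ≤ E)
    (hv : ∀ b, (v b).totalDegree ≤ F) (a : m) : ((A *ᵥ v) a).totalDegree ≤ E + F :=
  totalDegree_finsetSum_le fun l _ =>
    (totalDegree_mul _ _).trans (Nat.add_le_add (hA a l) (hv l))

variable [Fintype p] [DecidableEq p]

theorem totalDegree_det_le {A : Matrix p p (MvPolynomial σ R)} {E : ℕ}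
    (hA : ∀ a b, (A a b).totalDegree ≤ E) : A.det.totalDegree ≤ Fintype.card p * E := by
  rw [det_apply']
  refine totalDegree_finsetSum_le fun g _ => (totalDegree_mul _ _).trans ?_
  rw [← map_intCast (C (σ := σ) (R := R)), totalDegree_C, zero_add]
  exact totalDegree_prod_le_card_mul univ fun a _ => hA (g a) a

theorem totalDegree_adjugate_le {A : Matrix p p (MvPolynomial σ R)} {E : ℕ}
    (hA : ∀ a b, (A a b).totalDegree ≤ E) (a b : p) :
    (A.adjugate a b).totalDegree ≤ Fintype.card p * E := by
  rw [adjugate_apply]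
  refine totalDegree_det_le fun i j => ?_
  rcases eq_or_ne i b with rfl | hi
  · rw [updateRow_self, totalDegree_single_one]
    exact Nat.zero_le E
  · rw [updateRow_ne hi]
    exact hA i j

theorem totalDegree_cramerKernel_le [DecidableEq n] {A : Matrix m n (MvPolynomial σ R)} {E : ℕ}
    (hA : ∀ a b, (A a b).totalDegree ≤ E) (r : p → m) (c : p → n) (a b : n) :
    (cramerKernel A r c a b).totalDegree ≤ (Fintype.card p + 1) * E := by
  have hminor : ∀ i j, (A.submatrix r c i j).totalDegree ≤ E := fun i j => hA (r i) (c j)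
  have hone : ∀ i j, ((1 : Matrix n n (MvPolynomial σ R)) i j).totalDegree ≤ 0 := fun i j => by
    rw [← Matrix.diagonal_one, diagonal_apply]
    split_ifs
    exacts [totalDegree_one.le, totalDegree_zero.le]
  refine (totalDegree_sub _ _).trans (max_le ?_ ?_)
  · calc _ ≤ Fintype.card p * E + 0 := (totalDegree_mul _ _).trans
          (Nat.add_le_add (totalDegree_det_le hminor) (hone a b))
      _ ≤ (Fintype.card p + 1) * E := by linarith
  · calc _ ≤ 0 + Fintype.card p * E + E :=
          totalDegree_mul_apply_le (totalDegree_mul_apply_le (fun i j => hone i (c j))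
            (totalDegree_adjugate_le hminor)) (fun i j => hA (r i) j) a b
      _ = (Fintype.card p + 1) * E := by ring

end Matrix

section Tensor

variable {σ K η κ : Type*} {ι : η → Type*} [CommRing K] [Fintype η] [DecidableEq η]
  [∀ i, Fintype (ι i)] {T : (∀ i, ι i) → κ → K} {x : ∀ i, ι i → MvPolynomial σ K} {F : ℕ}

theorem totalDegree_tensorMap_le (hx : ∀ i l, (x i l).totalDegree ≤ F) (w : κ) :
    (tensorMap (MvPolynomial σ K) T x w).totalDegree ≤ Fintype.card η * F := by
  rw [tensorMap_apply]
  refine totalDegree_finsetSum_le fun j _ => (totalDegree_mul _ _).trans ?_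
  rw [algebraMap_eq, totalDegree_C, zero_add]
  exact totalDegree_prod_le_card_mul univ fun i _ => hx i (j i)

theorem totalDegree_slice_le [∀ i, DecidableEq (ι i)] (hx : ∀ i l, (x i l).totalDegree ≤ F) (i : η)
    (w : κ) (l : ι i) : (slice T x i w l).totalDegree ≤ Fintype.card η * F := by
  rw [slice_apply]
  refine totalDegree_tensorMap_le (fun j a => ?_) w
  rcases eq_or_ne j i with rfl | hj
  · rw [Function.update_self, totalDegree_single_one]
    exact Nat.zero_le F
  · rw [Function.update_of_ne hj]
    exact hx j a

end Tensor

section Path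

variable {σ K κ : Type*} {d : ℕ} {ι : Fin d → Type*} [CommRing K] [∀ i, Fintype (ι i)]
  [∀ i, DecidableEq (ι i)] (T : (∀ i, ι i) → κ → K) (P : Pivots ι κ) (x₀ : ∀ i, ι i → K)
  {u : ∀ i, ι i → MvPolynomial σ K} {c : ℕ}

theorem totalDegree_path_le (hu : ∀ i l, (u i l).totalDegree ≤ 1) (hc : ∀ i, P.size i ≤ c)
    (s : Fin (d + 1)) (i : Fin d) (l : ι i) :
    (path T P x₀ u s i l).totalDegree ≤ ((c + 1) * d + 1) ^ (s : ℕ) := by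
  induction s using Fin.induction generalizing i l with
  | zero =>
    rw [path_zero]
    exact (totalDegree_C (x₀ i l)).trans_le (Nat.zero_le _)
  | succ s ih =>
    rw [Fin.val_castSucc] at ih
    have hmono : ((c + 1) * d + 1) ^ (s : ℕ) ≤ ((c + 1) * d + 1) ^ (s.succ : ℕ) :=
      Nat.pow_le_pow_right (Nat.succ_pos _) (Nat.le_succ _)
    rw [path_succ]
    rcases eq_or_ne i s with rfl | hi
    · rw [Function.update_self]
      refine (totalDegree_add _ _).trans (max_le ((ih i l).trans hmono) ?_)
      have hslice := totalDegree_slice_le (T := T) ih i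
      rw [Fintype.card_fin] at hslice
      calc _ ≤ (Fintype.card (Fin (P.size i)) + 1) * (d * ((c + 1) * d + 1) ^ (i : ℕ)) + 1 :=
            totalDegree_mulVec_le (totalDegree_cramerKernel_le hslice _ _) (hu i) l
        _ ≤ (c + 1) * (d * ((c + 1) * d + 1) ^ (i : ℕ)) + ((c + 1) * d + 1) ^ (i : ℕ) := by
            rw [Fintype.card_fin]
            gcongr
            exacts [hc i, Nat.one_le_pow _ _ (Nat.succ_pos _)]
        _ = ((c + 1) * d + 1) ^ (i.succ : ℕ) := by
            rw [Fin.val_succ, pow_succ]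
            ring
    · rw [Function.update_of_ne hi]
      exact (ih i l).trans hmono

theorem totalDegree_pathMinor_le (hu : ∀ i l, (u i l).totalDegree ≤ 1) (hc : ∀ i, P.size i ≤ c)
    (i : Fin d) : (pathMinor T P x₀ u i).totalDegree ≤ c * (d * ((c + 1) * d + 1) ^ d) := by
  have hslice := totalDegree_slice_le (T := T) (totalDegree_path_le T P x₀ hu hc i.castSucc) i
  calc _ ≤ _ := totalDegree_det_le fun a b => hslice (P.row i a) (P.col i b)
    _ ≤ c * (d * ((c + 1) * d + 1) ^ d) := by
      rw [Fintype.card_fin, Fintype.card_fin, Fin.val_castSucc]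
      gcongr
      exacts [hc i, Nat.succ_pos _, i.2.le]

end Path

end TotalDegree

section Obstruction

variable {σ K κ : Type*} {d : ℕ} {ι : Fin d → Type*} [CommRing K] [∀ i, Fintype (ι i)]
  [∀ i, DecidableEq (ι i)] {R S : Type*} [CommRing R] [Algebra K R] [CommRing S] [Algebra K S]

/-- The product of all pivot minors along the path with the `w`-th component of the tensor at its
end. Where it does not vanish, the path has left the zero set although it met only nonsingular pivot
minors. -/
noncomputable def obstruction (T : (∀ i, ι i) → κ → K) (P : Pivots ι κ) (x₀ : ∀ i, ι i → K)
    (w : κ) (u : ∀ i, ι i → R) : R :=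
  (∏ i, pathMinor T P x₀ u i) * tensorMap R T (path T P x₀ u (Fin.last d)) w

variable (T : (∀ i, ι i) → κ → K) (P : Pivots ι κ) (x₀ : ∀ i, ι i → K) (w : κ)

theorem obstruction_map (φ : R →ₐ[K] S) (u : ∀ i, ι i → R) :
    obstruction T P x₀ w (fun i => φ ∘ u i) = φ (obstruction T P x₀ w u) := by
  simp only [obstruction, pathMinor_map, path_map, tensorMap_map, map_mul, map_prod,
    Function.comp_apply]

/-- A bound for the degree of the obstruction when the slices have rank at most `c`. -/
def obstructionDegree (d c : ℕ) : ℕ :=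
  (d * c + 1) * (d * ((c + 1) * d + 1) ^ d)

theorem totalDegree_obstruction_le {u : ∀ i, ι i → MvPolynomial σ K} {c : ℕ}
    (hu : ∀ i l, (u i l).totalDegree ≤ 1) (hc : ∀ i, P.size i ≤ c) :
    (obstruction T P x₀ w u).totalDegree ≤ obstructionDegree d c := by
  have hminors := totalDegree_prod_le_card_mul univ fun i _ =>
    totalDegree_pathMinor_le T P x₀ hu hc i
  have htensor := totalDegree_tensorMap_le (T := T)
    (totalDegree_path_le T P x₀ hu hc (Fin.last d)) w
  rw [card_univ, Fintype.card_fin] at hminors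
  rw [Fintype.card_fin, Fin.val_last] at htensor
  calc _ ≤ d * (c * (d * ((c + 1) * d + 1) ^ d)) + d * ((c + 1) * d + 1) ^ d :=
        (MvPolynomial.totalDegree_mul _ _).trans (Nat.add_le_add hminors htensor)
    _ = obstructionDegree d c := by
        rw [obstructionDegree]
        ring

end Obstruction

section GenericPoint

variable {K η κ : Type*} [CommRing K]

/-- The generic argument of `path`, with one variable for each of its coordinates. -/
noncomputable def genericPoint (K : Type*) [CommRing K] (ι : η → Type*) (i : η) (l : ι i) :
    MvPolynomial (Σ i, ι i) K :=
  MvPolynomial.X ⟨i, l⟩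

theorem aeval_comp_genericPoint {ι : η → Type*} (v : (Σ i, ι i) → K) :
    (fun i => MvPolynomial.aeval v ∘ genericPoint K ι i) = fun i l => v ⟨i, l⟩ := by
  funext i l
  simp [genericPoint]

theorem constantCoeff_pathMinor_genericPoint {d : ℕ} {ι : Fin d → Type*} [∀ i, Fintype (ι i)]
    [∀ i, DecidableEq (ι i)] (T : (∀ i, ι i) → κ → K) (P : Pivots ι κ) (x₀ : ∀ i, ι i → K)
    (i : Fin d) :
    MvPolynomial.constantCoeff (pathMinor T P x₀ (genericPoint K ι) i) =
      ((slice T x₀ i).submatrix (P.row i) (P.col i)).det := by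
  have h := pathMinor_map T P x₀ (MvPolynomial.aeval (0 : (Σ i, ι i) → K)) (genericPoint K ι) i
  rw [aeval_comp_genericPoint, MvPolynomial.aeval_zero] at h
  refine h.symm.trans ?_
  change pathMinor T P x₀ (0 : ∀ i, ι i → K) i = _
  rw [pathMinor, path_of_eq_zero]
  rfl

end GenericPoint

/-! ### Staying in the zero set along the path -/

section Walk

open scoped Classical

section Steps

variable {K η κ : Type*} {ι : η → Type*} [Field K] [Fintype K] [Fintype η] [DecidableEq η]
  [∀ i, Fintype (ι i)] [∀ i, DecidableEq (ι i)] {T : (∀ i, ι i) → κ → K}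

theorem two_mul_card_filter_update_mem_lt {p : Type*} [Fintype p] [DecidableEq p]
    {x : ∀ i, ι i → K} {i : η} {E : Finset (∀ i, ι i → K)} (hx : x ∈ zeroSet T)
    (hE : x ∉ markovSet T i E) {r : p → κ} {c : p → ι i}
    (hdet : ((slice T x i).submatrix r c).det ≠ 0) :
    2 * #{v | Function.update x i (x i + cramerKernel (slice T x i) r c *ᵥ v) ∈ E} <
      Fintype.card (ι i → K) := by
  let L := (cramerKernel (slice T x i) r c).mulVecLin
  let N := Nat.card (LinearMap.range L)
  have hker : LinearMap.ker (slice T x i).mulVecLin ≤ LinearMap.range L := fun y hy => by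
    refine ⟨((slice T x i).submatrix r c).det⁻¹ • y, ?_⟩
    rw [map_smul, Matrix.mulVecLin_apply, cramerKernel_mulVec_of_mulVec_eq_zero r c hy, smul_smul,
      inv_mul_cancel₀ hdet, one_smul]
  have hfew : 2 * #{y | Function.update x i (x i + y) ∈ E} < N := by
    have hshift : #{y | Function.update x i (x i + y) ∈ E} = #{y | Function.update x i y ∈ E} :=
      card_equiv (Equiv.addLeft (x i)) fun y => by simp
    have hmarkov :
        2 * #{y | Function.update x i y ∈ E} < #{y | Function.update x i y ∈ zeroSet T} :=
      not_le.1 fun hle => hE (mem_filter.2 ⟨mem_univ _, hx, hle⟩)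
    rw [hshift]
    refine hmarkov.trans_le ?_
    rw [card_filter_update_mem_zeroSet, ← Nat.card_eq_fintype_card]
    exact Nat.card_mono (Set.toFinite _) hker
  have hcount := card_filter_mem_mul_card_range_le L {y | Function.update x i (x i + y) ∈ E}
  simp only [mem_filter, mem_univ, true_and] at hcount
  refine Nat.lt_of_mul_lt_mul_right (a := N) ?_
  calc 2 * #{v | Function.update x i (x i + L v) ∈ E} * N
      ≤ 2 * #{y | Function.update x i (x i + y) ∈ E} * Fintype.card (ι i → K) := by
        rw [mul_assoc, mul_assoc]
        exact Nat.mul_le_mul_left 2 hcount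
    _ < Fintype.card (ι i → K) * N := by
        rw [mul_comm]
        exact Nat.mul_lt_mul_of_pos_left hfew Fintype.card_pos

end Steps

variable {K κ : Type*} {d : ℕ} {ι : Fin d → Type*} [Field K] [∀ i, Fintype (ι i)]
  [∀ i, DecidableEq (ι i)] {T : (∀ i, ι i) → κ → K} {P : Pivots ι κ} {x₀ : ∀ i, ι i → K}
  {c : ℕ} {w : κ} {u : ∀ i, ι i → K}

theorem path_update_succ (i : Fin d) (v : ι i → K) :
    path T P x₀ (Function.update u i v) i.succ = Function.update (path T P x₀ u i.castSucc) i
      (path T P x₀ u i.castSucc i + pathKernel T P x₀ u i *ᵥ v) := by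
  have hpath : path T P x₀ (Function.update u i v) i.castSucc = path T P x₀ u i.castSucc :=
    path_congr T P x₀ fun j hj => Function.update_of_ne (Fin.castSucc_lt_castSucc_iff.1 hj).ne _ _
  rw [path_succ, pathKernel, hpath, Function.update_self, pathKernel]

theorem pathMinor_ne_zero_of_obstruction_ne_zero (hu : obstruction T P x₀ w u ≠ 0) (i : Fin d) :
    pathMinor T P x₀ u i ≠ 0 :=
  prod_ne_zero_iff.1 (left_ne_zero_of_mul hu) i (mem_univ i)

variable [Fintype K]

theorem path_update_succ_mem_zeroSet [Finite κ] {i : Fin d}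
    (hZ : path T P x₀ u i.castSucc ∈ zeroSet T) (hdet : pathMinor T P x₀ u i ≠ 0)
    (hrank : (slice T (path T P x₀ u i.castSucc) i).rank ≤ P.size i) (v : ι i → K) :
    path T P x₀ (Function.update u i v) i.succ ∈ zeroSet T := by
  have hmul := mul_cramerKernel_eq_zero hdet (by rwa [Fintype.card_fin])
  rw [path_update_succ, update_mem_zeroSet, Matrix.mulVec_add, slice_mulVec_self, mem_zeroSet.1 hZ,
    pathKernel, Matrix.mulVec_mulVec, hmul, Matrix.zero_mulVec, add_zero]

theorem two_mul_card_filter_obstruction_update_eq_zero_lt (hc : ∀ i, P.size i ≤ c)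
    (hq : 2 * obstructionDegree d c < Fintype.card K) (hu : obstruction T P x₀ w u ≠ 0)
    (i : Fin d) :
    2 * #{v | obstruction T P x₀ w (Function.update u i v) = 0} < Fintype.card (ι i → K) := by
  let U : ∀ j, ι j → MvPolynomial (ι i) K :=
    Function.update (fun j l => MvPolynomial.C (u j l)) i MvPolynomial.X
  let Q := obstruction T P x₀ w U
  have heval : ∀ v,
      MvPolynomial.eval v Q = obstruction T P x₀ w (Function.update u i v) := fun v => by
    have hU : (fun j => MvPolynomial.aeval v ∘ U j) = Function.update u i v := by
      funext j l
      rcases eq_or_ne j i with rfl | hj <;> simp [U, *]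
    rw [← hU, obstruction_map]
    exact (DFunLike.congr_fun (MvPolynomial.coe_aeval_eq_eval v) Q).symm
  have hQ : Q ≠ 0 := fun h => hu <| by
    rw [← Function.update_eq_self i u, ← heval, h, map_zero]
  have hdeg : Q.totalDegree ≤ obstructionDegree d c :=
    totalDegree_obstruction_le T P x₀ w (fun j l => by
      rcases eq_or_ne j i with rfl | hj <;> simp [U, *]) hc
  simp only [← heval]
  refine Nat.lt_of_mul_lt_mul_left (a := Fintype.card K) ?_
  calc Fintype.card K * (2 * #{v | MvPolynomial.eval v Q = 0})
      ≤ 2 * (Q.totalDegree * Fintype.card (ι i → K)) := by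
        rw [mul_left_comm]
        exact Nat.mul_le_mul_left 2 (card_mul_card_filter_eval_eq_zero_le hQ)
    _ ≤ 2 * obstructionDegree d c * Fintype.card (ι i → K) := by
        rw [mul_assoc]
        gcongr
    _ < Fintype.card K * Fintype.card (ι i → K) := Nat.mul_lt_mul_of_pos_right hq Fintype.card_pos

theorem exists_path_update_succ_notMem_exceptional (hc : ∀ i, P.size i ≤ c)
    (hq : 2 * obstructionDegree d c < Fintype.card K) (hu : obstruction T P x₀ w u ≠ 0)
    {i : Fin d} (hZ : path T P x₀ u i.castSucc ∈ zeroSet T)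
    (hE : path T P x₀ u i.castSucc ∉ exceptional T c i.castSucc) :
    ∃ v, obstruction T P x₀ w (Function.update u i v) ≠ 0 ∧
      path T P x₀ (Function.update u i v) i.succ ∉ exceptional T c i.succ := by
  by_contra! hcon
  let zeros : Finset (ι i → K) := {v | obstruction T P x₀ w (Function.update u i v) = 0}
  let bad : Finset (ι i → K) :=
    {v | path T P x₀ (Function.update u i v) i.succ ∈ exceptional T c i.succ}
  have hcover : univ ⊆ zeros ∪ bad := fun v _ => by
    rw [mem_union, mem_filter, mem_filter, or_iff_not_imp_left]
    exact fun hv => ⟨mem_univ v, hcon v fun h => hv ⟨mem_univ v, h⟩⟩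
  have hsum := (card_le_card hcover).trans (card_union_le _ _)
  rw [exceptional_castSucc, mem_union, not_or] at hE
  have hexceptional := two_mul_card_filter_update_mem_lt hZ hE.2
    (pathMinor_ne_zero_of_obstruction_ne_zero hu i)
  have hobstruction := two_mul_card_filter_obstruction_update_eq_zero_lt hc hq hu i
  simp only [zeros, bad, path_update_succ, pathKernel, card_univ] at hsum
  omega

theorem exists_path_mem_zeroSet [Finite κ] (hx₀ : x₀ ∈ zeroSet T) (hE : x₀ ∉ exceptional T c 0)
    (hrank : ∀ j, (slice T x₀ j).rank ≤ P.size j) (hc : ∀ i, P.size i ≤ c)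
    (hq : 2 * obstructionDegree d c < Fintype.card K) (hu : obstruction T P x₀ w u ≠ 0)
    (s : Fin (d + 1)) :
    ∃ u : ∀ i, ι i → K, obstruction T P x₀ w u ≠ 0 ∧ path T P x₀ u s ∈ zeroSet T ∧
      path T P x₀ u s ∉ exceptional T c s ∧ ∀ j, (slice T (path T P x₀ u s) j).rank ≤ P.size j := by
  induction s using Fin.induction with
  | zero =>
    refine ⟨u, hu, ?_⟩
    rw [path_zero]
    exact ⟨hx₀, hE, hrank⟩
  | succ i ih =>
    obtain ⟨u, hu, hZ, hE, hrank⟩ := ih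
    obtain ⟨v, hv, hvE⟩ := exists_path_update_succ_notMem_exceptional hc hq hu hZ hE
    have hvZ := path_update_succ_mem_zeroSet hZ (pathMinor_ne_zero_of_obstruction_ne_zero hu i)
      (hrank i) v
    refine ⟨Function.update u i v, hv, hvZ, hvE, fun j => ?_⟩
    rw [exceptional_castSucc, mem_union, not_or] at hE
    rw [path_update_succ] at hvZ ⊢
    exact (rank_slice_update_le_of_notMem_rankJumps hZ hE.1 hvZ ((hrank j).trans (hc j))).trans
      (hrank j)

/-- The polynomial path lies in the zero set: otherwise the obstruction would be nonzero at some
point over `K`, and changing the arguments of that point one by one, at random, would lead to a path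
which avoids the exceptional sets, hence stays in the zero set. -/
theorem tensorMap_path_genericPoint_eq_zero [Finite κ] (hx₀ : x₀ ∈ zeroSet T)
    (hE : x₀ ∉ exceptional T c 0) (hrank : ∀ j, (slice T x₀ j).rank ≤ P.size j)
    (hdet : ∀ i, ((slice T x₀ i).submatrix (P.row i) (P.col i)).det ≠ 0)
    (hc : ∀ i, P.size i ≤ c) (hq : 2 * obstructionDegree d c < Fintype.card K) :
    tensorMap (MvPolynomial (Σ i, ι i) K) T (path T P x₀ (genericPoint K ι) (Fin.last d)) = 0 := by
  funext w
  by_contra hne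
  let Q := obstruction T P x₀ w (genericPoint K ι)
  have hQ : Q ≠ 0 := mul_ne_zero (prod_ne_zero_iff.2 fun i _ h => hdet i <| by
    rw [← constantCoeff_pathMinor_genericPoint, h, map_zero]) hne
  have hdeg : Q.totalDegree < Fintype.card K := by
    have h : Q.totalDegree ≤ obstructionDegree d c :=
      totalDegree_obstruction_le T P x₀ w (fun i l => (MvPolynomial.totalDegree_X _).le) hc
    omega
  obtain ⟨v, hv⟩ : ∃ v, MvPolynomial.eval v Q ≠ 0 := by
    by_contra! hzero
    have h := card_mul_card_filter_eval_eq_zero_le hQ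
    rw [filter_true_of_mem fun v _ => hzero v, card_univ] at h
    exact hdeg.not_ge (Nat.le_of_mul_le_mul_right h Fintype.card_pos)
  have hu : obstruction T P x₀ w (fun i l => v ⟨i, l⟩) ≠ 0 := by
    rwa [← aeval_comp_genericPoint, obstruction_map]
  obtain ⟨u', hu', hZ, -, -⟩ := exists_path_mem_zeroSet hx₀ hE hrank hc hq hu (Fin.last d)
  exact right_ne_zero_of_mul hu' (congrFun (mem_zeroSet.1 hZ) w)

end Walk

/-! ### Reading off a decomposition -/

section PartitionRankLE

variable {K η κ : Type*} {ι : η → Type*} [CommRing K]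

/-- The tensor `T`, whose last coordinate is `κ`, is a sum of at most `N` products of two tensors:
the first one involves only a nonempty set of coordinates other than `κ`, and the second one
involves the remaining coordinates including `κ`. -/
def PartitionRankLE (T : (∀ i, ι i) → κ → K) (N : ℕ) : Prop :=
  ∃ r ≤ N, ∃ (I : Fin r → Set η) (β : Fin r → (∀ i, ι i) → K) (γ : Fin r → (∀ i, ι i) → κ → K),
    (∀ t, (I t).Nonempty ∧ DependsOn (β t) (I t) ∧ DependsOn (γ t) (I t)ᶜ) ∧
    ∀ j w, T j w = ∑ t, β t j * γ t j w

theorem PartitionRankLE.mono {T : (∀ i, ι i) → κ → K} {M N : ℕ} (h : PartitionRankLE T M)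
    (hMN : M ≤ N) : PartitionRankLE T N :=
  h.imp fun _ hr => ⟨hr.1.trans hMN, hr.2⟩

theorem PartitionRankLE.of_fintype {T : (∀ i, ι i) → κ → K} {τ : Type*} [Fintype τ] {I : τ → Set η}
    {β : τ → (∀ i, ι i) → K} {γ : τ → (∀ i, ι i) → κ → K}
    (h : ∀ t, (I t).Nonempty ∧ DependsOn (β t) (I t) ∧ DependsOn (γ t) (I t)ᶜ)
    (hT : ∀ j w, T j w = ∑ t, β t j * γ t j w) : PartitionRankLE T (Fintype.card τ) := by
  let e := (Fintype.equivFin τ).symm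
  refine ⟨_, le_rfl, I ∘ e, β ∘ e, γ ∘ e, fun t => h (e t), fun j w => ?_⟩
  rw [hT]
  exact (Equiv.sum_comp e fun t => β t j * γ t j w).symm

end PartitionRankLE

section Extraction

section Exponent

variable {η : Type*} {ι : η → Type*}

/-- The exponent of the monomial `∏ i ∈ s, X ⟨i, j i⟩`. -/
noncomputable def exponent (s : Finset η) (j : ∀ i, ι i) : (Σ i, ι i) →₀ ℕ :=
  ∑ i ∈ s, Finsupp.single ⟨i, j i⟩ 1

theorem exponent_apply [DecidableEq η] [∀ i, DecidableEq (ι i)] (s : Finset η) (j : ∀ i, ι i)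
    (i : η) (l : ι i) :
    exponent s j ⟨i, l⟩ = if i ∈ s ∧ j i = l then 1 else 0 := by
  have hsingle : ∀ k, Finsupp.single (⟨k, j k⟩ : Σ i, ι i) 1 ⟨i, l⟩ =
      if k = i then (if j i = l then 1 else 0) else 0 := fun k => by
    rcases eq_or_ne k i with rfl | hk <;> simp [Finsupp.single_apply, *]
  rw [exponent, Finsupp.finsetSum_apply, sum_congr rfl fun k _ => hsingle k, sum_ite_eq', ite_and]

theorem exponent_le_exponent_univ_iff [Fintype η] {s : Finset η} {j j' : ∀ i, ι i} :
    exponent s j' ≤ exponent univ j ↔ ∀ i ∈ s, j' i = j i := by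
  classical
  constructor
  · intro h i hi
    by_contra hne
    have hle := h ⟨i, j' i⟩
    simp [exponent_apply, hi, Ne.symm hne] at hle
  · rintro h ⟨i, l⟩
    rw [exponent_apply, exponent_apply]
    by_cases hi : i ∈ s <;> simp [hi, h i]

theorem dependsOn_exponent (s : Finset η) : DependsOn (exponent (ι := ι) s) s :=
  fun _ _ h => sum_congr rfl fun i hi => by rw [h i hi]

theorem exponent_univ_tsub [Fintype η] [DecidableEq η] {s : Finset η} {j j' : ∀ i, ι i}
    (h : ∀ i ∈ s, j' i = j i) : exponent univ j - exponent s j' = exponent sᶜ j := by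
  rw [dependsOn_exponent s h, exponent, exponent, exponent, ← sum_add_sum_compl s,
    add_tsub_cancel_left]

end Exponent

variable {K η κ : Type*} {ι : η → Type*} [CommRing K] [Fintype η] {O : η → Type*}

theorem prod_elim_genericPoint (v : ∀ i, O i → ι i → K) (o : ∀ i, Option (O i)) (j : ∀ i, ι i) :
    ∏ i, (o i).elim (genericPoint K ι i) (fun a => MvPolynomial.C ∘ v i a) (j i) =
      MvPolynomial.monomial (exponent {i | o i = none} j)
        (∏ i, (o i).elim 1 fun a => v i a (j i)) := by
  rw [exponent, sum_filter, MvPolynomial.monomial_sum_index, map_prod, ← prod_mul_distrib]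
  refine prod_congr rfl fun i _ => ?_
  cases o i <;> simp [genericPoint, MvPolynomial.X]

variable [DecidableEq η] [∀ i, Fintype (ι i)] (T : (∀ i, ι i) → κ → K)

theorem tensorMap_apply_single [∀ i, DecidableEq (ι i)] (j : ∀ i, ι i) :
    tensorMap K T (fun i => Pi.single (j i) 1) = T j := by
  ext w
  rw [tensorMap_apply, sum_eq_single j _ (by simp)]
  · simp
  · intro j' _ hne
    obtain ⟨i, hi⟩ := Function.ne_iff.1 hne
    rw [prod_eq_zero (mem_univ i) (Pi.single_eq_of_ne hi 1), mul_zero]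

theorem coeff_exponent_mul_tensorMap [∀ i, DecidableEq (ι i)]
    (F : MvPolynomial (Σ i, ι i) K) (v : ∀ i, O i → ι i → K)
    (o : ∀ i, Option (O i)) (j : ∀ i, ι i) (w : κ) :
    MvPolynomial.coeff (exponent univ j) (F * tensorMap (MvPolynomial (Σ i, ι i) K) T
        (fun i => (o i).elim (genericPoint K ι i) fun a => MvPolynomial.C ∘ v i a) w) =
      MvPolynomial.coeff (exponent {i | o i ≠ none} j) F *
        tensorMap K T (fun i => (o i).elim (Pi.single (j i) 1) (v i)) w := by
  rw [tensorMap_apply, tensorMap_apply, mul_sum, mul_sum, MvPolynomial.coeff_sum]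
  refine sum_congr rfl fun j' _ => ?_
  rw [prod_elim_genericPoint, MvPolynomial.algebraMap_eq, MvPolynomial.C_mul_monomial,
    MvPolynomial.coeff_mul_monomial']
  by_cases hj : ∀ i ∈ ({i | o i = none} : Finset η), j' i = j i
  · rw [if_pos (exponent_le_exponent_univ_iff.2 hj), exponent_univ_tsub hj, compl_filter]
    congr 2
    refine prod_congr rfl fun i _ => ?_
    cases hi : o i with
    | none => simp [hj i (by simpa using hi)]
    | some a => rfl
  · rw [if_neg (mt exponent_le_exponent_univ_iff.1 hj)]
    push Not at hj
    obtain ⟨i, hi, hne⟩ := hj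
    rw [prod_eq_zero (mem_univ i), mul_zero, mul_zero]
    simp [(mem_filter.1 hi).2, Pi.single_eq_of_ne hne]

variable [∀ i, Fintype (O i)]

theorem sum_coeff_mul_tensorMap_eq_zero [∀ i, DecidableEq (ι i)]
    {p : ∀ i, ι i → MvPolynomial (Σ i, ι i) K} {g : η → MvPolynomial (Σ i, ι i) K}
    {h : ∀ i, O i → MvPolynomial (Σ i, ι i) K} {v : ∀ i, O i → ι i → K}
    (hp : ∀ i, p i = g i • genericPoint K ι i + ∑ a, h i a • (MvPolynomial.C ∘ v i a))
    (hT : tensorMap (MvPolynomial (Σ i, ι i) K) T p = 0) (j : ∀ i, ι i) (w : κ) :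
    ∑ o : ∀ i, Option (O i),
      MvPolynomial.coeff (exponent {i | o i ≠ none} j) (∏ i, (o i).elim (g i) (h i)) *
        tensorMap K T (fun i => (o i).elim (Pi.single (j i) 1) (v i)) w = 0 := by
  have hexpand : p = fun i => ∑ a : Option (O i),
      a.elim (g i) (h i) • a.elim (genericPoint K ι i) fun a => MvPolynomial.C ∘ v i a :=
    funext fun i => by
      rw [hp, Fintype.sum_option]
      rfl
  rw [hexpand, MultilinearMap.map_sum] at hT
  simp only [MultilinearMap.map_smul_univ] at hT
  have hcoeff := congrArg (MvPolynomial.coeff (exponent univ j)) (congrFun hT w)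
  rw [Finset.sum_apply, MvPolynomial.coeff_sum] at hcoeff
  exact (sum_congr rfl fun o _ => (coeff_exponent_mul_tensorMap T _ v o j w).symm).trans hcoeff

theorem partitionRankLE_of_tensorMap_eq_zero {p : ∀ i, ι i → MvPolynomial (Σ i, ι i) K}
    {g : η → MvPolynomial (Σ i, ι i) K} {h : ∀ i, O i → MvPolynomial (Σ i, ι i) K}
    {v : ∀ i, O i → ι i → K}
    (hp : ∀ i, p i = g i • genericPoint K ι i + ∑ a, h i a • (MvPolynomial.C ∘ v i a))
    (hT : tensorMap (MvPolynomial (Σ i, ι i) K) T p = 0)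
    (hg : ∀ i, IsUnit (MvPolynomial.constantCoeff (g i))) :
    PartitionRankLE T (∏ i, (Fintype.card (O i) + 1)) := by
  classical
  let coef (o : ∀ i, Option (O i)) : MvPolynomial (Σ i, ι i) K := ∏ i, (o i).elim (g i) (h i)
  let β (o : ∀ i, Option (O i)) (j : ∀ i, ι i) : K :=
    MvPolynomial.coeff (exponent {i | o i ≠ none} j) (coef o)
  let γ (o : ∀ i, Option (O i)) (j : ∀ i, ι i) : κ → K :=
    tensorMap K T fun i => (o i).elim (Pi.single (j i) 1) (v i)
  have hsum : ∀ j w, ∑ o, β o j * γ o j w = 0 := sum_coeff_mul_tensorMap_eq_zero T hp hT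
  let main (i : η) : Option (O i) := none
  obtain ⟨a, ha⟩ : IsUnit (MvPolynomial.constantCoeff (∏ i, g i)) := by
    rw [map_prod]
    exact IsUnit.prod_univ_iff.2 hg
  have hβ : ∀ j, β main j = a := fun j => by
    rw [ha, MvPolynomial.constantCoeff_eq]
    simp [β, coef, main, exponent]
  have hγ : ∀ j w, γ main j w = T j w := fun j w => by
    simp [γ, main, tensorMap_apply_single]
  have hmain : PartitionRankLE T (Fintype.card {o // o ≠ main}) := by
    refine .of_fintype (I := fun o => {i | o.1 i ≠ none}) (β := fun o j => -(↑a⁻¹ * β o j))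
      (γ := fun o => γ o) (fun o => ⟨Function.ne_iff.1 o.2, fun j j' h => ?_, fun j j' h => ?_⟩)
      fun j w => ?_
    · have hexp : exponent {i | o.1 i ≠ none} j = exponent {i | o.1 i ≠ none} j' :=
        dependsOn_exponent _ (by simpa using h)
      simp only [β, hexp]
    · have harg : (fun i => (o.1 i).elim (Pi.single (j i) 1) (v i)) =
          fun i => (o.1 i).elim (Pi.single (j' i) 1) (v i) := funext fun i => by
        by_cases hi : o.1 i = none
        · rw [h i (by simpa using hi)]
        · obtain ⟨a, ha⟩ := Option.ne_none_iff_exists'.1 hi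
          rw [ha]
          rfl
      simp only [γ, harg]
    · have hj := hsum j w
      rw [Fintype.sum_eq_add_sum_subtype_ne _ main, hβ, hγ] at hj
      simp only [neg_mul, sum_neg_distrib, mul_assoc, ← mul_sum]
      rw [eq_neg_of_add_eq_zero_right hj, mul_neg, neg_neg, Units.inv_mul_cancel_left]
  refine hmain.mono ((Fintype.card_subtype_le _).trans_eq ?_)
  simp

end Extraction

section LargeField

variable {K κ : Type*} {d : ℕ} {ι : Fin d → Type*} [Field K] [∀ i, Fintype (ι i)]
  [∀ i, DecidableEq (ι i)] (T : (∀ i, ι i) → κ → K)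

theorem exists_path_genericPoint_eq (P : Pivots ι κ) (x₀ : ∀ i, ι i → K) (i : Fin d) :
    ∃ h : Option (Fin (P.size i)) → MvPolynomial (Σ i, ι i) K,
      path T P x₀ (genericPoint K ι) (Fin.last d) i =
        pathMinor T P x₀ (genericPoint K ι) i • genericPoint K ι i +
          ∑ o, h o • (MvPolynomial.C ∘ o.elim (x₀ i) fun a => Pi.single (P.col i a) 1) := by
  have hsingle (l : ι i) :
      (MvPolynomial.C : K →+* MvPolynomial (Σ i, ι i) K) ∘ Pi.single l 1 = Pi.single l 1 := by
    ext l'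
    simp [Pi.single_apply, apply_ite MvPolynomial.C]
  let S := slice T (path T P x₀ (genericPoint K ι) i.castSucc) i
  let z := (S.submatrix (P.row i) (P.col i)).adjugate *ᵥ
    (S.submatrix (P.row i) id *ᵥ genericPoint K ι i)
  refine ⟨fun o => o.elim 1 fun a => -z a, ?_⟩
  rw [path_apply_of_lt T P x₀ _ (Fin.castSucc_lt_last i), pathKernel, cramerKernel_mulVec,
    Fintype.sum_option]
  simp only [Option.elim_none, Option.elim_some, one_smul, neg_smul, sum_neg_distrib, hsingle,
    MvPolynomial.algebraMap_eq, pathMinor]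
  abel

theorem two_mul_obstructionDegree_le (d c : ℕ) :
    2 * obstructionDegree d c ≤ (3 * ((d + 1) * (c + 1))) ^ (d + 2) := by
  have h₁ : d * c + 1 ≤ (d + 1) * (c + 1) := by nlinarith
  have h₂ : d ≤ (d + 1) * (c + 1) := by nlinarith
  have h₃ : (c + 1) * d + 1 ≤ (d + 1) * (c + 1) := by nlinarith
  have htwo : 2 ≤ 3 ^ (d + 2) :=
    (by norm_num : 2 ≤ 3 ^ 1).trans (Nat.pow_le_pow_right (by norm_num) (by omega))
  calc 2 * obstructionDegree d c
      ≤ 3 ^ (d + 2) * (((d + 1) * (c + 1)) * (((d + 1) * (c + 1)) * ((d + 1) * (c + 1)) ^ d)) := by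
        rw [obstructionDegree]
        gcongr
    _ = (3 * ((d + 1) * (c + 1))) ^ (d + 2) := by
        generalize (d + 1) * (c + 1) = y
        ring

theorem counting_threshold_le (d c : ℕ) :
    3 ^ d * (d ^ 2 * (c + 1)) + d ≤ (3 * ((d + 1) * (c + 1))) ^ (d + 2) := by
  have hd : d ≤ (d + 1) * (c + 1) := by nlinarith
  have hsq : d ^ 2 * (c + 1) ≤ ((d + 1) * (c + 1)) ^ 2 := by
    rw [mul_pow]
    gcongr
    · omega
    · nlinarith
  generalize (d + 1) * (c + 1) = y at hd hsq ⊢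
  calc 3 ^ d * (d ^ 2 * (c + 1)) + d
      ≤ 3 ^ d * y ^ 2 + 3 ^ d * y ^ 2 := by
        gcongr
        nlinarith [Nat.one_le_pow d 3 (by norm_num), Nat.le_self_pow two_ne_zero y]
    _ ≤ 3 ^ (d + 2) * y ^ 2 := by
        rw [← two_mul, ← mul_assoc, pow_add, mul_comm 2]
        gcongr
        norm_num
    _ ≤ (3 * y) ^ (d + 2) := by
        rw [mul_pow]
        gcongr 3 ^ (d + 2) * ?_
        rcases y.eq_zero_or_pos with rfl | hy
        · simp
        · exact Nat.pow_le_pow_right hy (by omega)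

theorem partitionRankLE_of_lt_card [Fintype K] [Finite κ] {c : ℕ}
    (hZ : Fintype.card (∀ i, ι i → K) ≤ Fintype.card K ^ c * #(zeroSet T))
    (hq : (3 * ((d + 1) * (c + 1))) ^ (d + 2) < Fintype.card K) :
    PartitionRankLE T ((c + 2) ^ d) := by
  obtain ⟨x₀, hx₀, hE, hrank⟩ :=
    exists_mem_zeroSet_notMem_exceptional T hZ ((counting_threshold_le d c).trans_lt hq)
  choose r l hdet using fun i => exists_submatrix_det_ne_zero (slice T x₀ i) le_rfl
  let P : Pivots ι κ := ⟨fun i => (slice T x₀ i).rank, r, l⟩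
  have hT := tensorMap_path_genericPoint_eq_zero (P := P) hx₀ hE (fun _ => le_rfl) hdet hrank
    ((two_mul_obstructionDegree_le d c).trans_lt hq)
  choose h hpath using exists_path_genericPoint_eq T P x₀
  refine (partitionRankLE_of_tensorMap_eq_zero T hpath hT fun i => ?_).mono ?_
  · rw [constantCoeff_pathMinor_genericPoint]
    exact (hdet i).isUnit
  · refine (prod_le_pow_card _ _ (c + 2) fun i _ => ?_).trans_eq (by simp)
    simpa using hrank i

end LargeField

/-! ### Passing to a large extension field -/

section Box

open scoped BigOperators

theorem expect_pow_le_expect_pow {X : Type*} [Fintype X] [Nonempty X] {f : X → ℝ}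
    (hf : ∀ x, 0 ≤ f x) (n : ℕ) : (𝔼 x, f x) ^ n ≤ 𝔼 x, f x ^ n := by
  simp only [Fintype.expect_eq_sum_div_card, div_eq_inv_mul, mul_sum]
  exact Real.pow_arith_mean_le_arith_mean_pow _ _ _ (fun _ _ => by positivity) (by simp)
    (fun x _ => hf x) n

theorem expect_pi_succ {d : ℕ} {X : Fin (d + 1) → Type*} [∀ i, Fintype (X i)]
    (f : (∀ i, X i) → ℝ) :
    𝔼 x, f x = 𝔼 a : X 0, 𝔼 x : ∀ i : Fin d, X i.succ, f (Fin.cons a x) := by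
  rw [← Finset.expect_product', univ_product_univ]
  exact (Fintype.expect_equiv (Fin.consEquiv X) _ _ fun _ => rfl).symm

theorem expect_pow_le_expect_prod_box (m : ℕ) {d : ℕ} {X : Fin d → Type*} [∀ i, Fintype (X i)]
    [∀ i, Nonempty (X i)] {f : (∀ i, X i) → ℝ} (hf : ∀ x, 0 ≤ f x) :
    (𝔼 x, f x) ^ (m ^ d) ≤
      𝔼 y : ∀ i, Fin m → X i, ∏ l : Fin d → Fin m, f fun i => y i (l i) := by
  induction d with
  | zero => simp [Subsingleton.elim _ (finZeroElim : ∀ i, X i)]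
  | succ d ih =>
    have hfirst : (𝔼 x, f x) ^ m ≤
        𝔼 y : Fin m → X 0, 𝔼 x : ∀ i : Fin d, X i.succ, ∏ e, f (Fin.cons (y e) x) := by
      rw [expect_pi_succ, expect_comm, expect_comm univ univ fun (y : Fin m → X 0) _ => _]
      refine (expect_pow_le_expect_pow (fun x => expect_nonneg fun a _ => hf _) m).trans_eq ?_
      simp only [expect_pow, Fintype.piFinset_univ]
    calc (𝔼 x, f x) ^ m ^ (d + 1) = ((𝔼 x, f x) ^ m) ^ m ^ d := by rw [pow_succ', pow_mul]
      _ ≤ (𝔼 y : Fin m → X 0, 𝔼 x : ∀ i : Fin d, X i.succ, ∏ e, f (Fin.cons (y e) x)) ^ m ^ d :=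
        pow_le_pow_left₀ (pow_nonneg (expect_nonneg fun x _ => hf x) _) hfirst _
      _ ≤ 𝔼 y : Fin m → X 0, (𝔼 x : ∀ i : Fin d, X i.succ, ∏ e, f (Fin.cons (y e) x)) ^ m ^ d :=
        expect_pow_le_expect_pow (fun y => expect_nonneg fun x _ => prod_nonneg fun e _ => hf _) _
      _ ≤ 𝔼 y₀ : Fin m → X 0, 𝔼 y : ∀ i : Fin d, Fin m → X i.succ,
          ∏ l : Fin d → Fin m, ∏ e, f (Fin.cons (y₀ e) fun i => y i (l i)) :=
        expect_le_expect fun y₀ _ => ih fun x => prod_nonneg fun e _ => hf _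
      _ = _ := by
        rw [expect_pi_succ]
        refine expect_congr rfl fun y₀ _ => expect_congr rfl fun y _ => ?_
        rw [← (Fin.consEquiv fun _ : Fin (d + 1) => Fin m).prod_comp, Fintype.prod_prod_type_right]
        refine prod_congr rfl fun l _ => prod_congr rfl fun e _ => congrArg f ?_
        funext i
        cases i using Fin.cases <;> rfl

theorem dens_pow_le_dens_box (m : ℕ) {d : ℕ} {X : Fin d → Type*} [∀ i, Fintype (X i)]
    [∀ i, Nonempty (X i)] (S : Finset (∀ i, X i))
    [DecidablePred fun y : ∀ i, Fin m → X i => ∀ l : Fin d → Fin m, (fun i => y i (l i)) ∈ S] :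
    S.dens ^ (m ^ d) ≤
      ({y : ∀ i, Fin m → X i | ∀ l : Fin d → Fin m, (fun i => y i (l i)) ∈ S} : Finset _).dens := by
  classical
  let boxes : Finset (∀ i, Fin m → X i) := {y | ∀ l : Fin d → Fin m, (fun i => y i (l i)) ∈ S}
  let f : (∀ i, X i) → ℝ := Set.indicator S 1
  have hbox := expect_pow_le_expect_prod_box m (f := f)
    (Set.indicator_nonneg fun _ _ => zero_le_one)
  have hprod : ∀ y : ∀ i, Fin m → X i, ∏ l : Fin d → Fin m, f (fun i => y i (l i)) =
      Set.indicator (boxes : Set (∀ i, Fin m → X i)) 1 y := fun y => by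
    simp [f, boxes, Set.indicator_apply, Finset.prod_ite_zero]
  simp only [hprod, f, expect_indicator_one] at hbox
  exact_mod_cast hbox

end Box

section Extension

theorem inv_natCast_le_dens_iff {X : Type*} [Fintype X] [Nonempty X] {S : Finset X} {n : ℕ}
    (hn : 0 < n) : (n : ℚ≥0)⁻¹ ≤ S.dens ↔ Fintype.card X ≤ n * #S := by
  have hX : (0 : ℚ≥0) < Fintype.card X := mod_cast Fintype.card_pos
  rw [dens, le_div_iff₀ hX, inv_mul_le_iff₀ (by exact_mod_cast hn)]
  norm_cast

variable {F K η κ : Type*} [Field F] [Field K] [Algebra F K]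

section

variable {ι : η → Type*} [Fintype η] [DecidableEq η] [∀ i, Fintype (ι i)]
  (T : (∀ i, ι i) → κ → F)

theorem tensorMap_algebraMap_comp :
    tensorMap K (fun j => algebraMap F K ∘ T j) = tensorMap K T := by
  ext x w
  simp [tensorMap_apply]

theorem tensorMap_sum_smul_eq_zero {p : Type*} [Fintype p] (b : p → K)
    {y : ∀ i, p → ι i → F} (h : ∀ l : η → p, tensorMap F T (fun i => y i (l i)) = 0) :
    tensorMap K T (fun i => ∑ e, b e • (algebraMap F K ∘ y i e)) = 0 := by
  rw [MultilinearMap.map_sum]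
  refine sum_eq_zero fun l _ => ?_
  rw [MultilinearMap.map_smul_univ]
  have hl := tensorMap_map (Algebra.ofId F K) T fun i => y i (l i)
  have hzero : tensorMap K T (fun i => algebraMap F K ∘ y i (l i)) = 0 := by
    refine hl.trans ?_
    rw [h]
    ext
    simp
  rw [hzero, smul_zero]

end

variable {d m : ℕ}

theorem card_pi_le_mul_card_zeroSet_extension {ι : Fin d → Type*} [∀ i, Fintype (ι i)]
    [∀ i, DecidableEq (ι i)] [Fintype F] [Fintype K] (b : Module.Basis (Fin m) F K)
    (T : (∀ i, ι i) → κ → F) {A : ℕ}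
    (hZ : Fintype.card (∀ i, ι i → F) ≤ Fintype.card F ^ A * #(zeroSet T)) :
    Fintype.card (∀ i, ι i → K) ≤
      Fintype.card K ^ (A * m ^ d) * #(zeroSet fun j => algebraMap F K ∘ T j) := by
  classical
  let Φ : (∀ i, Fin m → ι i → F) ≃ (∀ i, ι i → K) := Equiv.piCongrRight fun i =>
    (Equiv.piComm _).trans (Equiv.piCongrRight fun _ => b.equivFun.symm.toEquiv)
  have hΦ : ∀ y i, Φ y i = ∑ e, b e • (algebraMap F K ∘ y i e) := fun y i => by
    ext l
    simp [Φ, Algebra.smul_def, mul_comm]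
  let boxes : Finset (∀ i, Fin m → ι i → F) :=
    {y | ∀ l : Fin d → Fin m, (fun i => y i (l i)) ∈ zeroSet T}
  have hboxes : #boxes ≤ #(zeroSet fun j => algebraMap F K ∘ T j) := by
    refine card_le_card_of_injOn Φ (fun y hy => ?_) Φ.injective.injOn
    rw [mem_coe, mem_zeroSet, tensorMap_algebraMap_comp, funext (hΦ y)]
    exact tensorMap_sum_smul_eq_zero T b fun l => mem_zeroSet.1 ((mem_filter.1 hy).2 l)
  have hq : 0 < Fintype.card F := Fintype.card_pos
  have hdens : ((Fintype.card F ^ (A * m ^ d) : ℕ) : ℚ≥0)⁻¹ ≤ boxes.dens := by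
    rw [pow_mul, Nat.cast_pow, ← inv_pow]
    exact (pow_le_pow_left₀ (zero_le) ((inv_natCast_le_dens_iff (pow_pos hq A)).2 hZ) _).trans
      (dens_pow_le_dens_box m _)
  calc Fintype.card (∀ i, ι i → K) = Fintype.card (∀ i, Fin m → ι i → F) :=
        (Fintype.card_congr Φ).symm
    _ ≤ Fintype.card F ^ (A * m ^ d) * #boxes := (inv_natCast_le_dens_iff (pow_pos hq _)).1 hdens
    _ ≤ Fintype.card K ^ (A * m ^ d) * #(zeroSet fun j => algebraMap F K ∘ T j) := by
        gcongr
        exact Fintype.card_le_of_injective _ (algebraMap F K).injective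

theorem PartitionRankLE.of_extension {ι : η → Type*} (b : Module.Basis (Fin m) F K)
    {T : (∀ i, ι i) → κ → F} {N : ℕ} (h : PartitionRankLE (fun j => algebraMap F K ∘ T j) N) :
    PartitionRankLE T (N * m) := by
  obtain ⟨τ, hτ⟩ := LinearMap.exists_leftInverse_of_injective (Algebra.linearMap F K)
    (LinearMap.ker_eq_bot.2 (algebraMap F K).injective)
  obtain ⟨r, hr, I, β, γ, hI, hT⟩ := h
  refine PartitionRankLE.mono (.of_fintype (τ := Fin r × Fin m) (I := fun t => I t.1)
    (β := fun t j => b.repr (β t.1 j) t.2) (γ := fun t j w => τ (b t.2 * γ t.1 j w))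
    (fun t => ⟨(hI t.1).1, fun j j' hj => ?_, fun j j' hj => ?_⟩) fun j w => ?_) ?_
  · simp only [(hI t.1).2.1 hj]
  · simp only [(hI t.1).2.2 hj]
  · have hterm : ∀ t, τ (β t j * γ t j w) = ∑ e, b.repr (β t j) e * τ (b e * γ t j w) := fun t => by
      conv_lhs => rw [← b.sum_repr (β t j), Finset.sum_mul, map_sum]
      simp only [smul_mul_assoc, map_smul, smul_eq_mul]
    rw [Fintype.sum_prod_type, ← sum_congr rfl fun t _ => hterm t, ← map_sum, ← hT]
    exact (DFunLike.congr_fun hτ (T j w)).symm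
  · simpa using Nat.mul_le_mul_right m hr

theorem partitionRankLE_of_lt_two_pow {ι : Fin d → Type*} [∀ i, Fintype (ι i)]
    [∀ i, DecidableEq (ι i)] [Finite κ] [Fintype F] (T : (∀ i, ι i) → κ → F) {A m : ℕ} (hm : m ≠ 0)
    (hZ : Fintype.card (∀ i, ι i → F) ≤ Fintype.card F ^ A * #(zeroSet T))
    (hq : (3 * ((d + 1) * (A * m ^ d + 1))) ^ (d + 2) < 2 ^ m) :
    PartitionRankLE T ((A * m ^ d + 2) ^ d * m) := by
  obtain ⟨p, hp⟩ := CharP.exists F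
  have : Fact p.Prime := ⟨CharP.char_is_prime F p⟩
  have : NeZero m := ⟨hm⟩
  let K := FiniteField.Extension F p m
  have : Fintype K := Fintype.ofFinite K
  let b : Module.Basis (Fin m) F K :=
    Module.finBasisOfFinrankEq F K (FiniteField.finrank_extension F p m)
  have hcard : 2 ^ m ≤ Fintype.card K := by
    rw [Module.card_fintype b, Fintype.card_fin]
    exact Nat.pow_le_pow_left Fintype.one_lt_card m
  exact .of_extension b (partitionRankLE_of_lt_card _ (card_pi_le_mul_card_zeroSet_extension b T hZ)
    (hq.trans_le hcard))

end Extension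

/-! ### From tensors to multilinear forms -/

section Coefficients

theorem restrict_prod_restrict_compl_bijective {η : Type*} [Fintype η] [DecidableEq η]
    {ι : η → Type*} (I : Finset η) :
    Function.Bijective fun j : ∀ i, ι i => (I.restrict j, Iᶜ.restrict j) := by
  refine ⟨fun j j' h => funext fun i => ?_, fun p => ?_⟩
  · obtain ⟨hI, hIc⟩ := Prod.ext_iff.1 h
    by_cases hi : i ∈ I
    · exact congrFun hI ⟨i, hi⟩
    · exact congrFun hIc ⟨i, mem_compl.2 hi⟩
  · refine ⟨fun i => if hi : i ∈ I then p.1 ⟨i, hi⟩ else p.2 ⟨i, mem_compl.2 hi⟩, ?_⟩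
    ext i
    · simp
    · simp [mem_compl.1 i.2]

variable {K η : Type*} [CommRing K] [Fintype η] [DecidableEq η] {G ι : η → Type*}
  [∀ i, AddCommGroup (G i)] [∀ i, Module K (G i)] [∀ i, Fintype (ι i)]
  (b : ∀ i, Module.Basis (ι i) K (G i))

theorem multilinearMap_apply_eq_sum (α : MultilinearMap K G K) (x : ∀ i, G i) :
    α x = ∑ j : ∀ i, ι i, α (fun i => b i (j i)) * ∏ i, (b i).repr (x i) (j i) := by
  conv_lhs => rw [← funext fun i => (b i).sum_repr (x i)]
  rw [MultilinearMap.map_sum]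
  exact sum_congr rfl fun j _ => by rw [MultilinearMap.map_smul_univ, smul_eq_mul, mul_comm]

theorem tensorMap_apply_equivFun {κ : Type*} (f : κ → MultilinearMap K G K) (x : ∀ i, G i) (w : κ) :
    tensorMap K (fun j w => f w fun i => b i (j i)) (fun i => (b i).equivFun (x i)) w = f w x := by
  rw [multilinearMap_apply_eq_sum b, tensorMap_apply]
  rfl

/-- The multilinear form whose values on tuples of basis vectors are given by `c`. -/
noncomputable def ofCoeff (c : (∀ i, ι i) → K) : MultilinearMap K G K :=
  ∑ j, c j • (MultilinearMap.mkPiAlgebra K η K).compLinearMap fun i => (b i).coord (j i)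

theorem ofCoeff_apply (c : (∀ i, ι i) → K) (x : ∀ i, G i) :
    ofCoeff b c x = ∑ j, c j * ∏ i, (b i).repr (x i) (j i) := by
  simp [ofCoeff]

theorem ofCoeff_mul_ofCoeff_compl (I : Finset η) (c : (∀ i : I, ι i) → K)
    (c' : (∀ i : ↥Iᶜ, ι i) → K) (x : ∀ i, G i) :
    ofCoeff (fun i : I => b i) c (I.restrict x) * ofCoeff (fun i : ↥Iᶜ => b i) c' (Iᶜ.restrict x) =
      ofCoeff b (fun j => c (I.restrict j) * c' (Iᶜ.restrict j)) x := by
  simp only [ofCoeff_apply]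
  rw [Finset.sum_mul_sum, ← Fintype.sum_prod_type',
    ← (restrict_prod_restrict_compl_bijective I).sum_comp]
  refine sum_congr rfl fun j _ => ?_
  rw [mul_mul_mul_comm]
  congr 1
  rw [← prod_mul_prod_compl I fun i => (b i).repr (x i) (j i), ← prod_coe_sort I,
    ← prod_coe_sort Iᶜ]
  rfl

theorem exists_multilinearMap_mul_of_dependsOn (I : Finset η) {c c' : (∀ i, ι i) → K}
    (hc : DependsOn c I) (hc' : DependsOn c' (Iᶜ : Finset η)) :
    ∃ (β : MultilinearMap K (fun i : I => G i) K) (γ : MultilinearMap K (fun i : ↥Iᶜ => G i) K),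
      ∀ x, β (fun i => x i) * γ (fun i => x i) = ofCoeff b (fun j => c j * c' j) x := by
  obtain ⟨g, rfl⟩ := dependsOn_iff_exists_comp.1 hc
  obtain ⟨g', rfl⟩ := dependsOn_iff_exists_comp.1 hc'
  exact ⟨_, _, fun x => ofCoeff_mul_ofCoeff_compl b I g g' x⟩

end Coefficients

section MultilinearForm

variable {F : Type*} {d : ℕ} {G ι : Fin (d + 1) → Type*} [Field F] [∀ i, AddCommGroup (G i)]
  [∀ i, Module F (G i)] (b : ∀ i, Module.Basis (ι i) F (G i)) (α : MultilinearMap F G F)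

/-- The coefficient array of the multilinear form `α` in the bases `b`. The first argument of `α`
becomes the output coordinate of the tensor. -/
noncomputable def coeffTensor (j : ∀ i : Fin d, ι i.succ) (w : ι 0) : F :=
  α (Fin.cons (b 0 w) fun i => b i.succ (j i))

theorem tensorMap_coeffTensor [∀ i, Fintype (ι i)] (x : ∀ i : Fin d, G i.succ) (w : ι 0) :
    tensorMap F (coeffTensor b α) (fun i => (b i.succ).equivFun (x i)) w =
      α (Fin.cons (b 0 w) x) :=
  tensorMap_apply_equivFun (fun i : Fin d => b i.succ) (fun w => α.curryLeft (b 0 w)) x w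

theorem exists_multilinearMap_of_partitionRankLE [∀ i, Finite (ι i)] {N : ℕ}
    (h : PartitionRankLE (coeffTensor b α) N) :
    ∃ r ≤ N, ∃ (I : Fin r → Finset (Fin (d + 1)))
      (β : ∀ t, MultilinearMap F (fun i : I t => G i) F)
      (γ : ∀ t, MultilinearMap F (fun i : ↥(I t)ᶜ => G i) F),
      (∀ t, (I t).Nonempty ∧ I t ≠ univ) ∧
      ∀ x : ∀ i, G i, α x = ∑ t, β t (fun i => x i) * γ t (fun i => x i) := by
  classical
  have := fun i => Fintype.ofFinite (ι i)
  obtain ⟨r, hr, I, β, γ, hI, hT⟩ := h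
  let I' (t : Fin r) : Finset (Fin (d + 1)) := (I t).toFinset.map (Fin.succEmb d)
  have hmem : ∀ t i, i.succ ∈ I' t ↔ i ∈ I t := fun t i => by simp [I']
  have hzero : ∀ t, 0 ∉ I' t := fun t => by simp [I']
  have hβ : ∀ t, DependsOn (fun j : ∀ i, ι i => β t (Fin.tail j)) (I' t) := fun t j j' h =>
    (hI t).2.1 fun i hi => h i.succ ((hmem t i).2 hi)
  have hγ : ∀ t, DependsOn (fun j : ∀ i, ι i => γ t (Fin.tail j) (j 0)) ((I' t)ᶜ : Finset _) :=
    fun t j j' h => by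
      have htail : γ t (Fin.tail j) = γ t (Fin.tail j') := (hI t).2.2 fun i hi =>
        h i.succ (mem_coe.2 (mem_compl.2 (mt (hmem t i).1 hi)))
      simp only [htail, h 0 (mem_coe.2 (mem_compl.2 (hzero t)))]
  choose β' γ' hmul using fun t => exists_multilinearMap_mul_of_dependsOn b (I' t) (hβ t) (hγ t)
  refine ⟨r, hr, I', β', γ', fun t => ⟨?_, fun hI' => hzero t (hI' ▸ mem_univ _)⟩, fun x => ?_⟩
  · obtain ⟨i, hi⟩ := (hI t).1
    exact ⟨i.succ, (hmem t i).2 hi⟩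
  · have hα (j : ∀ i, ι i) :
        α (fun i => b i (j i)) = ∑ t, β t (Fin.tail j) * γ t (Fin.tail j) (j 0) := by
      rw [← hT, coeffTensor]
      congr 1
      funext i
      cases i using Fin.cases <;> rfl
    simp only [hmul, ofCoeff_apply, multilinearMap_apply_eq_sum b α x, hα, Finset.sum_mul]
    exact sum_comm

theorem sum_addChar_linearMap {V : Type*} [AddCommGroup V] [Module F V] [Fintype V]
    {χ : AddChar F ℂ} (hχ : χ ≠ 1) (φ : V →ₗ[F] F) [Decidable (φ = 0)] :
    ∑ v, χ (φ v) = if φ = 0 then (Fintype.card V : ℂ) else 0 := by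
  classical
  have hφ : χ.compAddMonoidHom φ.toAddMonoidHom = 0 ↔ φ = 0 := by
    refine ⟨fun h => ?_, fun h => by ext; simp [h]⟩
    by_contra hne
    refine hχ (DFunLike.ext _ _ fun t => ?_)
    obtain ⟨v, rfl⟩ := LinearMap.surjective hne t
    exact DFunLike.congr_fun h v
  have hsum := AddChar.sum_eq_ite (χ.compAddMonoidHom φ.toAddMonoidHom)
  simp only [hφ] at hsum
  exact hsum

variable [Fintype F] [∀ i, Fintype (G i)] [∀ i, Fintype (ι i)] [∀ i, DecidableEq (ι i)]

open scoped Classical in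
theorem sum_addChar_cons {χ : AddChar F ℂ} (hχ : χ ≠ 1) (x : ∀ i : Fin d, G i.succ) :
    ∑ v : G 0, χ (α (Fin.cons v x)) =
      if (fun i : Fin d => (b i.succ).equivFun (x i)) ∈ zeroSet (coeffTensor b α) then
        (Fintype.card (G 0) : ℂ) else 0 := by
  let φ : G 0 →ₗ[F] F := α.toLinearMap (Fin.cons 0 x) 0
  have hφ : ∀ v, φ v = α (Fin.cons v x) := fun v => congrArg α (Fin.update_cons_zero 0 x v)
  have hzero : φ = 0 ↔
      (fun i : Fin d => (b i.succ).equivFun (x i)) ∈ zeroSet (coeffTensor b α) := by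
    rw [mem_zeroSet, funext_iff]
    refine ⟨fun h w => ?_, fun h => (b 0).ext fun w => ?_⟩
    · rw [tensorMap_coeffTensor, ← hφ, h]
      rfl
    · rw [hφ, ← tensorMap_coeffTensor]
      exact h w
  simp only [← hφ, sum_addChar_linearMap hχ, hzero]

theorem sum_addChar_div_card_eq_dens_zeroSet {χ : AddChar F ℂ} (hχ : χ ≠ 1) :
    (∑ x, χ (α x)) / (Fintype.card (∀ i, G i) : ℂ) = (zeroSet (coeffTensor b α)).dens := by
  classical
  let e : (∀ i : Fin d, G i.succ) ≃ (∀ i : Fin d, ι i.succ → F) :=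
    Equiv.piCongrRight fun i => (b i.succ).equivFun.toEquiv
  have hcard : Fintype.card (∀ i, G i) =
      Fintype.card (∀ i : Fin d, ι i.succ → F) * Fintype.card (G 0) := by
    rw [← Fintype.card_congr (Fin.consEquiv G), Fintype.card_prod, Fintype.card_congr e, mul_comm]
  have hsum : ∑ x, χ (α x) = #(zeroSet (coeffTensor b α)) * Fintype.card (G 0) := by
    rw [← (Fin.consEquiv G).sum_comp, Fintype.sum_prod_type_right]
    refine (sum_congr rfl fun x _ => sum_addChar_cons b α hχ x).trans ?_
    refine (e.sum_comp fun y => if y ∈ zeroSet (coeffTensor b α) then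
      (Fintype.card (G 0) : ℂ) else 0).trans ?_
    rw [sum_ite_mem, univ_inter, sum_const, nsmul_eq_mul]
  rw [hsum, hcard, nnratCast_dens, Nat.cast_mul,
    mul_div_mul_right _ _ (Nat.cast_ne_zero.2 Fintype.card_ne_zero)]

end MultilinearForm

section Bound

variable {d : ℕ}

theorem card_pi_le_mul_card_zeroSet_coeffTensor {F : Type*} {G ι : Fin (d + 1) → Type*} [Field F]
    [Fintype F] [∀ i, AddCommGroup (G i)] [∀ i, Module F (G i)] [∀ i, Fintype (G i)]
    [∀ i, Fintype (ι i)] [∀ i, DecidableEq (ι i)] (b : ∀ i, Module.Basis (ι i) F (G i))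
    (α : MultilinearMap F G F) {χ : AddChar F ℂ} (hχ : χ ≠ 1) {a : ℝ} {A : ℕ} (haA : a ≤ A)
    (hα : (Fintype.card F : ℝ) ^ (-a) ≤
      ((∑ x, χ (α x)) / (Fintype.card (∀ i, G i) : ℂ)).re) :
    Fintype.card (∀ i : Fin d, ι i.succ → F) ≤
      Fintype.card F ^ A * #(zeroSet (coeffTensor b α)) := by
  have hq : (1 : ℝ) ≤ Fintype.card F := mod_cast Fintype.card_pos
  rw [sum_addChar_div_card_eq_dens_zeroSet b α hχ, ← Complex.ofReal_nnratCast, Complex.ofReal_re]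
    at hα
  rw [← inv_natCast_le_dens_iff (pow_pos Fintype.card_pos A), ← NNRat.cast_le (K := ℝ)]
  calc (((Fintype.card F ^ A : ℕ) : ℚ≥0)⁻¹ : ℚ≥0) = (Fintype.card F : ℝ) ^ (-(A : ℝ)) := by
        rw [Real.rpow_neg (zero_le_one.trans hq), Real.rpow_natCast]
        simp
    _ ≤ (Fintype.card F : ℝ) ^ (-a) := Real.rpow_le_rpow_of_exponent_le hq (neg_le_neg haA)
    _ ≤ (zeroSet (coeffTensor b α)).dens := hα

theorem mul_pow_add_le {A m : ℕ} (hm : m ≠ 0) (hA : A ≤ m) (n d : ℕ) :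
    A * m ^ d + n ≤ (n + 1) * m ^ (d + 1) := by
  have hone : n * 1 ≤ n * m ^ (d + 1) := by
    gcongr
    exact Nat.one_le_pow _ _ (Nat.pos_of_ne_zero hm)
  have hmul : A * m ^ d ≤ m ^ (d + 1) := by
    rw [pow_succ']
    gcongr
  linarith

theorem exists_forall_mul_pow_lt_two_pow (C n : ℕ) : ∃ m₀ ≠ 0, ∀ m ≥ m₀, C * m ^ n < 2 ^ m := by
  have hlim := tendsto_pow_const_div_const_pow_of_one_lt n (one_lt_two (α := ℝ))
  have hev := (hlim.const_mul (C : ℝ)).eventually_lt_const (by simp : (C : ℝ) * 0 < 1)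
  obtain ⟨m₀, hm₀⟩ := Filter.eventually_atTop.1 hev
  refine ⟨m₀ + 1, m₀.succ_ne_zero, fun m hm => ?_⟩
  have hlt := hm₀ m (Nat.le_of_succ_le hm)
  rw [mul_div_assoc', div_lt_one (by positivity)] at hlt
  exact_mod_cast hlt

theorem exists_forall_counting_threshold_lt_two_pow (d : ℕ) : ∃ m₀ ≠ 0, ∀ m ≥ m₀, ∀ A ≤ m,
    (3 * ((d + 1) * (A * m ^ d + 1))) ^ (d + 2) < 2 ^ m := by
  obtain ⟨m₀, hm₀, hlt⟩ := exists_forall_mul_pow_lt_two_pow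
    ((3 * ((d + 1) * 2)) ^ (d + 2)) ((d + 1) * (d + 2))
  refine ⟨m₀, hm₀, fun m hm A hA => lt_of_le_of_lt ?_ (hlt m hm)⟩
  calc (3 * ((d + 1) * (A * m ^ d + 1))) ^ (d + 2)
      ≤ (3 * ((d + 1) * (2 * m ^ (d + 1)))) ^ (d + 2) := by
        gcongr
        exact mul_pow_add_le (by lia) hA 1 d
    _ = (3 * ((d + 1) * 2)) ^ (d + 2) * m ^ ((d + 1) * (d + 2)) := by
        rw [pow_mul, ← mul_pow]
        ring

theorem exists_natCeil_add_pow_le (m₀ n : ℕ) :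
    ∃ C : ℝ, 0 < C ∧ ∀ a : ℝ, 0 ≤ a → ((⌈a⌉₊ + m₀ : ℕ) : ℝ) ^ n ≤ C * (a ^ n + 1) := by
  let B : ℝ := 1 + m₀
  have hB : 1 ≤ B := le_add_of_nonneg_right (Nat.cast_nonneg m₀)
  refine ⟨2 ^ (n - 1) * B ^ n, by positivity, fun a ha => ?_⟩
  have hm : ((⌈a⌉₊ + m₀ : ℕ) : ℝ) ≤ a + B := by
    push_cast
    linarith [Nat.ceil_lt_add_one ha]
  calc ((⌈a⌉₊ + m₀ : ℕ) : ℝ) ^ n ≤ (a + B) ^ n := by gcongr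
    _ ≤ 2 ^ (n - 1) * (a ^ n + B ^ n) := add_pow_le ha (zero_le_one.trans hB) n
    _ ≤ 2 ^ (n - 1) * (B ^ n * a ^ n + B ^ n) := by
        gcongr
        exact le_mul_of_one_le_left (by positivity) (one_le_pow₀ hB)
    _ = 2 ^ (n - 1) * B ^ n * (a ^ n + 1) := by ring

theorem exists_forall_rank_bound_le (d : ℕ) {m₀ : ℕ} (hm₀ : m₀ ≠ 0) :
    ∃ C : ℝ, 0 < C ∧ ∀ a : ℝ, 0 ≤ a →
      (((⌈a⌉₊ * (⌈a⌉₊ + m₀) ^ d + 2) ^ d * (⌈a⌉₊ + m₀) : ℕ) : ℝ) ≤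
        C * (a ^ ((d + 1) * d + 1) + 1) := by
  obtain ⟨C, hC, hbound⟩ := exists_natCeil_add_pow_le m₀ ((d + 1) * d + 1)
  refine ⟨3 ^ d * C, by positivity, fun a ha => ?_⟩
  have hnat : (⌈a⌉₊ * (⌈a⌉₊ + m₀) ^ d + 2) ^ d * (⌈a⌉₊ + m₀) ≤
      3 ^ d * (⌈a⌉₊ + m₀) ^ ((d + 1) * d + 1) := by
    rw [pow_succ, pow_mul, ← mul_assoc, ← mul_pow]
    gcongr
    exact mul_pow_add_le (by lia) (by lia) 2 d
  calc (((⌈a⌉₊ * (⌈a⌉₊ + m₀) ^ d + 2) ^ d * (⌈a⌉₊ + m₀) : ℕ) : ℝ)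
      ≤ 3 ^ d * ((⌈a⌉₊ + m₀ : ℕ) : ℝ) ^ ((d + 1) * d + 1) := mod_cast hnat
    _ ≤ 3 ^ d * (C * (a ^ ((d + 1) * d + 1) + 1)) := by
        gcongr
        exact hbound a ha
    _ = 3 ^ d * C * (a ^ ((d + 1) * d + 1) + 1) := by ring

end Bound

end PartitionRank

/-- **Polynomial bound for partition rank in terms of analytic rank.**
For every positive integer `k` there are constants `C, D > 0` (depending only on `k`)
such that for every finite field `𝔽` (with nontrivial additive character `χ`),
all finite-dimensional `𝔽`-vector spaces `G 0, …, G (k-1)` and every multilinear form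
`α : G 0 × ⋯ × G (k-1) → 𝔽`, we have `prank α ≤ C (arank α ^ D + 1)`.
Here `arank α = -log_{|𝔽|} 𝔼ₓ χ(α x)`, so `arank α ≤ a` is expressed by
`|𝔽| ^ (-a) ≤ 𝔼ₓ χ(α x)` (this expectation is a nonnegative real), and
`prank α ≤ m` is expressed by exhibiting a decomposition of `α` as a sum of `r ≤ m`
products `β i · γ i`, where `β i` and `γ i` are multilinear forms depending on the
coordinates of a nonempty proper subset `I i ⊊ [k]` and on its complement. -/
theorem partition_rank_poly_bound_of_analytic_rank :
    ∀ k : ℕ, 0 < k → ∃ C D : ℝ, 0 < C ∧ 0 < D ∧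
      ∀ (𝔽 : Type) [Field 𝔽] [Fintype 𝔽]
        (G : Fin k → Type) [∀ i, AddCommGroup (G i)] [∀ i, Module 𝔽 (G i)]
        [∀ i, Fintype (G i)] [∀ i, FiniteDimensional 𝔽 (G i)]
        (χ : AddChar 𝔽 ℂ), χ ≠ 1 →
      ∀ (α : MultilinearMap 𝔽 G 𝔽) (a : ℝ), 0 ≤ a →
      (Fintype.card 𝔽 : ℝ) ^ (-a) ≤
        (((∑ x : ∀ i, G i, χ (α x)) / (Fintype.card (∀ i, G i) : ℂ)).re) →
      ∃ r : ℕ,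
        (r : ℝ) ≤ C * (a ^ D + 1) ∧
        ∃ (I : Fin r → Finset (Fin k))
          (β : ∀ i, MultilinearMap 𝔽 (fun j : ↥(I i) => G j.1) 𝔽)
          (γ : ∀ i, MultilinearMap 𝔽 (fun j : ↥((I i)ᶜ) => G j.1) 𝔽),
          (∀ i, (I i).Nonempty ∧ I i ≠ Finset.univ) ∧
          ∀ x : ∀ i, G i, α x = ∑ i, β i (fun j => x j.1) * γ i (fun j => x j.1) := by
  intro k hk
  obtain ⟨d, rfl⟩ := Nat.exists_eq_succ_of_ne_zero hk.ne'
  obtain ⟨m₀, hm₀, hthreshold⟩ := PartitionRank.exists_forall_counting_threshold_lt_two_pow d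
  obtain ⟨C, hC, hbound⟩ := PartitionRank.exists_forall_rank_bound_le d hm₀
  refine ⟨C, ((d + 1) * d + 1 : ℕ), hC, by positivity, ?_⟩
  intro 𝔽 _ _ G _ _ _ _ χ hχ α a ha hα
  let b i := Module.finBasis 𝔽 (G i)
  have hZ := PartitionRank.card_pi_le_mul_card_zeroSet_coeffTensor b α hχ (Nat.le_ceil a) hα
  have hrank := PartitionRank.partitionRankLE_of_lt_two_pow (PartitionRank.coeffTensor b α)
    (m := ⌈a⌉₊ + m₀) (by lia) hZ (hthreshold _ (by lia) _ (by lia))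
  obtain ⟨r, hr, hdec⟩ := PartitionRank.exists_multilinearMap_of_partitionRankLE b α hrank
  refine ⟨r, ?_, hdec⟩
  rw [Real.rpow_natCast]
  exact (Nat.cast_le.2 hr).trans (hbound a ha)
end

section
/- For every positive integer k there exist constants C, D > 0 depending only on k with the following property: let α : G_1 × ⋯ × G_k → 𝔽 be a multilinear form with 𝔼_{x_1,…,x_k} χ(α(x_1,…,x_k)) ≥ c for some c > 0. Then there exist r ≤ C·(log_{|𝔽|}(|𝔽|·c^{-1}))^D, nonempty sets I_1, …, I_r ⊆ [k−1], and multilinear forms β_i : ∏_{j∈I_i} G_j → 𝔽 for i ∈ [r], such that every point x ∈ G_1 × ⋯ × G_k satisfying β_i(x_{I_i}) = 0 for all i ∈ [r] also satisfies α(x) = 0. -/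
/-!
Fix a coordinate `i₀` and a sequence of points `P₀, …, P_{t-1}` with `α (P l) ≠ 0` such that `α`
vanishes at every mixed point `(P_{f j} j)_j` with `f i₀ < f i` for some `i`. Restricting `α` to the
spans of the `P l` in each variable can only increase the bias. The bias of the restriction is the
probability that `t` forms in the remaining `k - 1` variables vanish simultaneously at a random
point. By triangularity the `l`-th form depends only on the coefficients of `P₀, …, P_l`, and once
those of `P₀, …, P_{l-1}` are fixed it vanishes with probability at most
`θ = 1 - (1 - 1/q)^(k-1)`, by Schwartz–Zippel. Hence `c ≤ θ ^ t`. Some power of `θ`, with exponent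
depending only on `k`, is at most `1/q`, so `t` is at most a constant times `log_q (q/c)`. If the
sequence is maximal, then a point `x` with `α x ≠ 0` cannot be appended to it, so some form
`x_S ↦ α (x_S, (P_{f j} j)_{j ∉ S})` with `i₀ ∉ S ≠ ∅` is nonzero at `x`: these at most `(2t)^k`
forms are the required ones.
-/

open Finset Function
open scoped BigOperators

lemma piecewise_insert_update_comp {ι : Type*} [DecidableEq ι] {V G : ι → Type*}
    (φ : ∀ i, V i → G i) {S : Finset ι} {j : ι} (hj : j ∉ S) (u : ∀ i, V i) (v : V j)
    (x : ∀ i, G i) :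
    (insert j S).piecewise (fun i => φ i (update u j v i)) x =
      update (S.piecewise (fun i => φ i (u i)) x) j (φ j v) := by
  rw [piecewise_insert, update_self]
  congr 1
  exact S.piecewise_congr
    (fun i hi => by rw [update_of_ne (ne_of_mem_of_not_mem hi hj)]) fun _ _ => rfl

lemma one_sub_one_sub_pow_nonneg {x : ℝ} (hx0 : 0 ≤ x) (hx1 : x ≤ 1) (m : ℕ) :
    0 ≤ 1 - (1 - x) ^ m :=
  sub_nonneg.2 (pow_le_one₀ (sub_nonneg.2 hx1) (sub_le_self 1 hx0))

section Expectation

variable {ι : Type*} [Fintype ι]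

lemma expect_ite_not [Nonempty ι] (p : ι → Prop) [DecidablePred p] :
    (𝔼 x, if ¬p x then (1 : ℝ) else 0) = 1 - 𝔼 x, if p x then (1 : ℝ) else 0 := by
  rw [eq_sub_iff_add_eq, ← expect_add_distrib, ← Fintype.expect_one (ι := ι) (M := ℝ)]
  refine expect_congr rfl fun x _ => ?_
  by_cases hx : p x <;> simp [hx]

variable [DecidableEq ι]

lemma expect_expect_update {V : ι → Type*} [∀ i, Fintype (V i)] {M : Type*} [AddCommMonoid M]
    [Module ℚ≥0 M] (j : ι) (F : (∀ i, V i) → M) :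
    𝔼 u, 𝔼 v : V j, F (update u j v) = 𝔼 u, F u := by
  have swap_involutive : Involutive
      fun p : (∀ i, V i) × V j => (update p.1 j p.2, p.1 j) := fun p => by simp
  calc 𝔼 u, 𝔼 v : V j, F (update u j v)
      = 𝔼 p : (∀ i, V i) × V j, F (update p.1 j p.2) :=
        (expect_product univ univ fun p : (∀ i, V i) × V j => F (update p.1 j p.2)).symm
    _ = 𝔼 p : (∀ i, V i) × V j, F p.1 :=
        Fintype.expect_equiv swap_involutive.toPerm _ _ fun _ => rfl
    _ = 𝔼 u, 𝔼 _v : V j, F u := expect_product univ univ fun p : (∀ i, V i) × V j => F p.1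
    _ = 𝔼 u, F u := expect_congr rfl fun u _ =>
        have : Nonempty (V j) := ⟨u j⟩
        Fintype.expect_const _

/-- Average over the largest coordinate first: the other factors do not depend on it. -/
lemma expect_prod_le_pow [LinearOrder ι] {Ω : Type*} [Fintype Ω] [Nonempty Ω] {θ : ℝ}
    (hθ : 0 ≤ θ) (g : ι → (ι → Ω) → ℝ) (g_nonneg : ∀ l w, 0 ≤ g l w)
    (g_update : ∀ l m, l < m → ∀ w v, g l (update w m v) = g l w)
    (expect_g_le : ∀ l w, 𝔼 v, g l (update w l v) ≤ θ) (S : Finset ι) :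
    𝔼 w, ∏ l ∈ S, g l w ≤ θ ^ #S := by
  induction S using Finset.induction_on_max with
  | empty => simp
  | insert m S hlt ih =>
    have hm : m ∉ S := fun h => lt_irrefl m (hlt m h)
    calc 𝔼 w, ∏ l ∈ insert m S, g l w
        = 𝔼 w, 𝔼 v, ∏ l ∈ insert m S, g l (update w m v) := (expect_expect_update m _).symm
      _ = 𝔼 w, (𝔼 v, g m (update w m v)) * ∏ l ∈ S, g l w := by
        refine expect_congr rfl fun w _ => ?_
        rw [expect_mul]
        refine expect_congr rfl fun v _ => ?_
        rw [prod_insert hm, prod_congr rfl fun l hl => g_update l m (hlt l hl) w v]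
      _ ≤ 𝔼 w, θ * ∏ l ∈ S, g l w := expect_le_expect fun w _ =>
        mul_le_mul_of_nonneg_right (expect_g_le m w) (prod_nonneg fun l _ => g_nonneg l w)
      _ = θ * 𝔼 w, ∏ l ∈ S, g l w := (mul_expect _ _ _).symm
      _ ≤ θ * θ ^ #S := mul_le_mul_of_nonneg_left ih hθ
      _ = θ ^ #(insert m S) := by rw [card_insert_of_notMem hm, pow_succ']

end Expectation

section ZeroDensity

variable {𝔽 M : Type*} [Field 𝔽] [Fintype 𝔽] [AddCommGroup M] [Module 𝔽 M]

open scoped Classical in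
lemma one_sub_inv_card_le_expect_add_smul_ne_zero (a : M) {b : M} (hb : b ≠ 0) :
    1 - (Fintype.card 𝔽 : ℝ)⁻¹ ≤ 𝔼 s : 𝔽, if a + s • b ≠ 0 then (1 : ℝ) else 0 := by
  have unique_zero (s t : 𝔽) (hs : a + s • b = 0) (ht : a + t • b = 0) : s = t :=
    smul_left_injective 𝔽 hb (add_left_cancel (hs.trans ht.symm))
  rw [expect_ite_not, Fintype.expect_ite_zero _ unique_zero]
  gcongr
  split_ifs
  · simp [NNRat.smul_def]
  · positivity

variable {ι : Type*} {G : ι → Type*} [DecidableEq ι] [Fintype ι]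
  [∀ i, AddCommGroup (G i)] [∀ i, Module 𝔽 (G i)]

open scoped Classical in
lemma pow_card_le_expect_piecewise_ne_zero (α : MultilinearMap 𝔽 G M) (a p : ∀ i, G i)
    (hp : α p ≠ 0) (S : Finset ι) :
    (1 - (Fintype.card 𝔽 : ℝ)⁻¹) ^ #S ≤
      𝔼 v : ι → 𝔽, if α (S.piecewise (fun i => a i + v i • p i) p) ≠ 0 then (1 : ℝ) else 0 := by
  induction S using Finset.induction_on with
  | empty => simp [hp]
  | insert j S hj ih =>
    let point (v : ι → 𝔽) : ∀ i, G i := S.piecewise (fun i => a i + v i • p i) p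
    have value_update (v : ι → 𝔽) (s : 𝔽) :
        α ((insert j S).piecewise (fun i => a i + update v j s i • p i) p) =
          α (update (point v) j (a j)) + s • α (point v) := by
      have point_self : update (point v) j (p j) = point v := by simp [point, hj]
      rw [piecewise_insert_update_comp (fun i c => a i + c • p i) hj, α.map_update_add,
        α.map_update_smul, point_self]
    calc (1 - (Fintype.card 𝔽 : ℝ)⁻¹) ^ #(insert j S)
        = (1 - (Fintype.card 𝔽 : ℝ)⁻¹) ^ #S * (1 - (Fintype.card 𝔽 : ℝ)⁻¹) := by
          rw [card_insert_of_notMem hj, pow_succ]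
      _ ≤ (𝔼 v, if α (point v) ≠ 0 then (1 : ℝ) else 0) * (1 - (Fintype.card 𝔽 : ℝ)⁻¹) :=
          mul_le_mul_of_nonneg_right ih (sub_nonneg.2 (Nat.cast_inv_le_one _))
      _ = 𝔼 v, (if α (point v) ≠ 0 then (1 : ℝ) else 0) * (1 - (Fintype.card 𝔽 : ℝ)⁻¹) :=
          expect_mul _ _ _
      _ ≤ 𝔼 v, 𝔼 s : 𝔽,
            if α (update (point v) j (a j)) + s • α (point v) ≠ 0 then (1 : ℝ) else 0 := by
          refine expect_le_expect fun v _ => ?_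
          by_cases h : α (point v) = 0
          · simp only [h, ne_eq, not_true_eq_false, if_false, zero_mul]
            exact expect_nonneg fun _ _ => by split_ifs <;> simp
          · simpa [h] using one_sub_inv_card_le_expect_add_smul_ne_zero _ h
      _ = _ := by
          simp only [← value_update]
          exact expect_expect_update j fun v =>
            if α ((insert j S).piecewise (fun i => a i + v i • p i) p) ≠ 0 then (1 : ℝ) else 0

open scoped Classical in
lemma expect_update_eq_zero_le (α : MultilinearMap 𝔽 G M) (a p : ∀ i, G i) (hp : α p ≠ 0)
    (i₀ : ι) :
    (𝔼 v : ι → 𝔽, if α (update (fun i => a i + v i • p i) i₀ (p i₀)) = 0 then (1 : ℝ) else 0) ≤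
      1 - (1 - (Fintype.card 𝔽 : ℝ)⁻¹) ^ (Fintype.card ι - 1) := by
  have nonzero_density := pow_card_le_expect_piecewise_ne_zero α a p hp ({i₀}ᶜ)
  simp only [piecewise_compl, piecewise_singleton, card_compl, card_singleton, ne_eq,
    expect_ite_not] at nonzero_density
  linarith

end ZeroDensity

section Bias

variable {𝔽 : Type*} [Field 𝔽] {χ : AddChar 𝔽 ℂ}

open scoped Classical in
lemma expect_re_addChar_apply (hχ : χ ≠ 1) {V : Type*} [AddCommGroup V] [Module 𝔽 V] [Fintype V]
    (L : V →ₗ[𝔽] 𝔽) : 𝔼 v, (χ (L v)).re = if L = 0 then (1 : ℝ) else 0 := by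
  have comp_eq_zero_iff : χ.compAddMonoidHom L.toAddMonoidHom = 0 ↔ L = 0 := by
    refine ⟨fun h => by_contra fun hL => hχ ?_, fun h => by ext; simp [h]⟩
    ext a
    obtain ⟨v, rfl⟩ := LinearMap.surjective hL a
    exact DFunLike.congr_fun h v
  calc 𝔼 v, (χ (L v)).re
      = (𝔼 v, χ.compAddMonoidHom L.toAddMonoidHom v).re := (Complex.re_expect _ _).symm
    _ = if L = 0 then (1 : ℝ) else 0 := by
      rw [AddChar.expect_eq_ite]
      simp only [comp_eq_zero_iff, apply_ite Complex.re, Complex.one_re, Complex.zero_re]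

lemma expect_re_addChar_le_comp (hχ : χ ≠ 1) {V W : Type*} [AddCommGroup V] [Module 𝔽 V]
    [Fintype V] [AddCommGroup W] [Module 𝔽 W] [Fintype W] (L : V →ₗ[𝔽] 𝔽) (φ : W →ₗ[𝔽] V) :
    𝔼 v, (χ (L v)).re ≤ 𝔼 w, (χ (L (φ w))).re := by
  classical
  have expect_comp := expect_re_addChar_apply hχ (L ∘ₗ φ)
  simp only [LinearMap.comp_apply] at expect_comp
  rw [expect_re_addChar_apply hχ, expect_comp]
  by_cases hL : L = 0
  · simp [hL]
  · simp only [hL, if_false]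
    split_ifs <;> simp

variable {ι : Type*} [Fintype ι] [DecidableEq ι] {G V : ι → Type*}
  [∀ i, AddCommGroup (G i)] [∀ i, Module 𝔽 (G i)] [∀ i, Fintype (G i)]
  [∀ i, AddCommGroup (V i)] [∀ i, Module 𝔽 (V i)] [∀ i, Fintype (V i)]

/-- The bias of a multilinear form, the quantity measuring its analytic rank. It is taken to be the
real part of the average of `χ ∘ α`; the average is a real number as soon as there is a variable. -/
noncomputable def bias (χ : AddChar 𝔽 ℂ) (α : MultilinearMap 𝔽 G 𝔽) : ℝ :=
  𝔼 x, (χ (α x)).re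

lemma re_sum_div_card_eq_bias (α : MultilinearMap 𝔽 G 𝔽) :
    ((∑ x, χ (α x)) / (Fintype.card (∀ i, G i) : ℂ)).re = bias χ α := by
  rw [bias, ← Complex.re_expect, Fintype.expect_eq_sum_div_card]

open scoped Classical in
lemma bias_eq_expect_toLinearMap_eq_zero (hχ : χ ≠ 1) (α : MultilinearMap 𝔽 G 𝔽) (j : ι) :
    bias χ α = 𝔼 x, if α.toLinearMap x j = 0 then (1 : ℝ) else 0 := by
  rw [bias, ← expect_expect_update j]
  exact expect_congr rfl fun x _ => expect_re_addChar_apply hχ (α.toLinearMap x j)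

/-- Replace the variables one at a time: a linear form vanishes at least as often after
precomposition with a linear map. -/
lemma bias_le_bias_compLinearMap (hχ : χ ≠ 1) (α : MultilinearMap 𝔽 G 𝔽)
    (φ : ∀ i, V i →ₗ[𝔽] G i) : bias χ α ≤ bias χ (α.compLinearMap φ) := by
  let mixed (S : Finset ι) (u : ∀ i, V i) (x : ∀ i, G i) : ∀ i, G i :=
    S.piecewise (fun i => φ i (u i)) x
  suffices mono : ∀ S : Finset ι, bias χ α ≤ 𝔼 u, 𝔼 x, (χ (α (mixed S u x))).re by
    simpa [mixed, bias, Fintype.expect_const] using mono univ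
  intro S
  induction S using Finset.induction_on with
  | empty => simp [mixed, bias]
  | insert j S hj ih =>
    let L (u : ∀ i, V i) (x : ∀ i, G i) : G j →ₗ[𝔽] 𝔽 := α.toLinearMap (mixed S u x) j
    calc bias χ α
        ≤ 𝔼 u, 𝔼 x, (χ (α (mixed S u x))).re := ih
      _ = 𝔼 u, 𝔼 x, 𝔼 y, (χ (L u x y)).re := by
        refine expect_congr rfl fun u _ => ?_
        rw [← expect_expect_update j]
        simp only [mixed, L, ← update_piecewise_of_notMem _ _ _ hj,
          MultilinearMap.toLinearMap_apply]
      _ ≤ 𝔼 u, 𝔼 x, 𝔼 v, (χ (L u x (φ j v))).re := by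
        refine expect_le_expect fun u _ => expect_le_expect fun x _ => ?_
        exact expect_re_addChar_le_comp hχ (L u x) (φ j)
      _ = 𝔼 x, 𝔼 u, 𝔼 v, (χ (L u x (φ j v))).re := expect_comm _ _ _
      _ = 𝔼 x, 𝔼 u, (χ (α (mixed (insert j S) u x))).re := by
        refine expect_congr rfl fun x _ => ?_
        rw [← expect_expect_update j fun u => (χ (α (mixed (insert j S) u x))).re]
        simp only [mixed, L, piecewise_insert_update_comp (fun i => φ i) hj,
          MultilinearMap.toLinearMap_apply]
      _ = 𝔼 u, 𝔼 x, (χ (α (mixed (insert j S) u x))).re := expect_comm _ _ _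

end Bias

section Triangular

variable {R : Type*} [CommSemiring R] {ι κ : Type*} {G : ι → Type*} {M : Type*}
  [∀ i, AddCommMonoid (G i)] [∀ i, Module R (G i)] [AddCommMonoid M] [Module R M]

/-- The point `∑ m, w m • P m`, where the scalar `w m i` may also depend on the coordinate `i`:
a parametrisation of the product of the spans of the coordinates of a family of points `P`. -/
def combination [Fintype κ] (P : κ → ∀ i, G i) (w : κ → ι → R) : ∀ i, G i :=
  fun i => ∑ m, w m i • P m i

/-- A family of points on which `α` is triangular: `α (P l) ≠ 0` on the diagonal, and `α` vanishes
at every mixed point having a coordinate from a later member of the family than its coordinate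
`i₀`. -/
structure IsTriangularFamily [LinearOrder κ] (α : MultilinearMap R G M) (i₀ : ι)
    (P : κ → ∀ i, G i) : Prop where
  diagonal_ne_zero : ∀ l, α (P l) ≠ 0
  mixed_eq_zero : ∀ (f : ι → κ) (i : ι), f i₀ < f i → α (fun j => P (f j) j) = 0

section Finite

variable [Fintype κ]

lemma combination_update [DecidableEq κ] (P : κ → ∀ i, G i) (w : κ → ι → R) (l : κ) (v : ι → R) :
    combination P (update w l v) = fun i => combination P (update w l 0) i + v i • P l i := by
  ext i
  have sum_erase_update (z : ι → R) : ∑ m ∈ univ.erase l, update w l z m i • P m i =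
      ∑ m ∈ univ.erase l, w m i • P m i :=
    sum_congr rfl fun m hm => by rw [update_of_ne (ne_of_mem_erase hm)]
  simp only [combination, ← add_sum_erase univ _ (mem_univ l), update_self, sum_erase_update,
    Pi.zero_apply, zero_smul, zero_add, add_comm]

variable [DecidableEq ι]

lemma update_combination [DecidableEq κ] (P : κ → ∀ i, G i) (w : κ → ι → R) (i₀ : ι) (l : κ) :
    update (combination P w) i₀ (P l i₀) =
      combination P fun m => update (w m) i₀ ((Pi.single l 1 : κ → R) m) := by
  ext i
  by_cases h : i = i₀
  · subst h; simp [combination, Pi.single_apply]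
  · simp [combination, h]

lemma map_combination [Fintype ι] (α : MultilinearMap R G M) (P : κ → ∀ i, G i) (w : κ → ι → R) :
    α (combination P w) = ∑ f : ι → κ, (∏ i, w (f i) i) • α fun i => P (f i) i := by
  unfold combination
  simp only [α.map_sum, α.map_smul_univ]

variable [LinearOrder κ] {α : MultilinearMap R G M} {i₀ : ι} {P : κ → ∀ i, G i}

lemma IsTriangularFamily.map_update_combination_congr [Finite ι] (hP : IsTriangularFamily α i₀ P)
    {l : κ} {w w' : κ → ι → R} (hw : ∀ m ≤ l, w m = w' m) :
    α (update (combination P w) i₀ (P l i₀)) = α (update (combination P w') i₀ (P l i₀)) := by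
  cases nonempty_fintype ι
  simp only [update_combination, map_combination]
  refine sum_congr rfl fun f _ => ?_
  by_cases hl : f i₀ = l
  · by_cases hf : ∃ i, f i₀ < f i
    · obtain ⟨i, hi⟩ := hf
      rw [hP.mixed_eq_zero f i hi, smul_zero, smul_zero]
    · push Not at hf
      congr 1
      exact prod_congr rfl fun i _ => by rw [hw _ ((hf i).trans_eq hl)]
  · have coeff_eq_zero (z : κ → ι → R) :
        ∏ i, update (z (f i)) i₀ ((Pi.single l 1 : κ → R) (f i)) i = 0 :=
      prod_eq_zero (mem_univ i₀) (by simp [hl])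
    rw [coeff_eq_zero, coeff_eq_zero]

end Finite

section Extension

variable [Finite ι] [DecidableEq ι] {α : MultilinearMap R G M} {i₀ : ι}

lemma IsTriangularFamily.snoc {t : ℕ} {P : Fin t → ∀ i, G i} (hP : IsTriangularFamily α i₀ P)
    {x : ∀ i, G i} (hx : α x ≠ 0)
    (hzero : ∀ S : Finset ι, S.Nonempty → i₀ ∉ S → ∀ f : ι → Fin t,
      α (S.piecewise x fun i => P (f i) i) = 0) :
    IsTriangularFamily α i₀ (Fin.snoc P x : Fin (t + 1) → ∀ i, G i) := by
  cases nonempty_fintype ι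
  constructor
  · refine Fin.lastCases ?_ fun l => ?_
    · simpa using hx
    · simpa using hP.diagonal_ne_zero l
  intro f i hi
  obtain ⟨l₀, hl₀⟩ := Fin.exists_castSucc_eq.2 (Fin.ne_last_of_lt hi)
  let S : Finset ι := {j | f j = Fin.last t}
  have hi₀ : i₀ ∉ S := by simp [S, ← hl₀, Fin.castSucc_ne_last]
  let g (j : ι) : Fin t := Fin.lastCases l₀ id (f j)
  have castSucc_g {j : ι} (hj : j ∉ S) : (g j).castSucc = f j := by
    obtain ⟨l, hl⟩ := Fin.exists_castSucc_eq.2 (show f j ≠ Fin.last t by simpa [S] using hj)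
    simp [g, ← hl]
  have mixed_eq_piecewise : (fun j => (Fin.snoc P x : Fin (t + 1) → ∀ i, G i) (f j) j) =
      S.piecewise x fun j => P (g j) j := by
    ext j
    by_cases hj : j ∈ S
    · have f_eq_last : f j = Fin.last t := by simpa [S] using hj
      simp [hj, f_eq_last]
    · rw [piecewise_eq_of_notMem _ _ _ hj, ← castSucc_g hj, Fin.snoc_castSucc]
  rw [mixed_eq_piecewise]
  rcases S.eq_empty_or_nonempty with hS | hS
  · rw [hS, piecewise_empty]
    have notMem (j : ι) : j ∉ S := hS ▸ notMem_empty j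
    refine hP.mixed_eq_zero g i (Fin.castSucc_lt_castSucc_iff.1 ?_)
    rwa [castSucc_g (notMem i₀), castSucc_g (notMem i)]
  · exact hzero S hS hi₀ g

lemma exists_points_of_isTriangularFamily_length_le {B : ℝ}
    (hB : ∀ t (P : Fin t → ∀ i, G i), IsTriangularFamily α i₀ P → (t : ℝ) ≤ B) :
    ∃ t, ∃ P : Fin t → ∀ i, G i, (t : ℝ) ≤ B ∧ ∀ x,
      (∀ S : Finset ι, S.Nonempty → i₀ ∉ S → ∀ f : ι → Fin t,
        α (S.piecewise x fun i => P (f i) i) = 0) → α x = 0 := by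
  have length_zero : ∃ P : Fin 0 → ∀ i, G i, IsTriangularFamily α i₀ P :=
    ⟨Fin.elim0, ⟨fun l => l.elim0, fun f => (f i₀).elim0⟩⟩
  have not_arbitrarily_long : ∃ t, ¬∃ P : Fin t → ∀ i, G i, IsTriangularFamily α i₀ P := by
    obtain ⟨t, ht⟩ := exists_nat_gt B
    exact ⟨t, fun ⟨P, hP⟩ => (hB t P hP).not_gt ht⟩
  obtain ⟨t, ht, hmax⟩ :=
    Nat.exists_not_and_succ_of_not_zero_of_exists (not_not.2 length_zero) not_arbitrarily_long
  obtain ⟨P, hP⟩ := not_not.1 ht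
  exact ⟨t, P, hB t P hP, fun x hzero => by_contra fun hx => hmax ⟨_, hP.snoc hx hzero⟩⟩

end Extension

end Triangular

section TriangularDensity

variable {𝔽 : Type*} [Field 𝔽] [Fintype 𝔽] {ι κ : Type*} [Fintype ι] [DecidableEq ι] [Fintype κ]
  {G : ι → Type*} [∀ i, AddCommGroup (G i)] [∀ i, Module 𝔽 (G i)]

open scoped Classical in
lemma IsTriangularFamily.expect_forall_eq_zero_le_pow [LinearOrder κ] {M : Type*} [AddCommGroup M]
    [Module 𝔽 M] {α : MultilinearMap 𝔽 G M} {i₀ : ι} {P : κ → ∀ i, G i}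
    (hP : IsTriangularFamily α i₀ P) :
    (𝔼 w : κ → ι → 𝔽, if ∀ l, α (update (combination P w) i₀ (P l i₀)) = 0 then (1 : ℝ) else 0) ≤
      (1 - (1 - (Fintype.card 𝔽 : ℝ)⁻¹) ^ (Fintype.card ι - 1)) ^ Fintype.card κ := by
  let g (l : κ) (w : κ → ι → 𝔽) : ℝ :=
    if α (update (combination P w) i₀ (P l i₀)) = 0 then 1 else 0
  have g_nonneg (l w) : 0 ≤ g l w := by unfold g; split_ifs <;> simp
  have g_update (l m : κ) (hlm : l < m) (w v) : g l (update w m v) = g l w := by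
    unfold g
    rw [hP.map_update_combination_congr fun n hn => update_of_ne (hn.trans_lt hlm).ne v w]
  have expect_g_le (l w) : 𝔼 v, g l (update w l v) ≤
      1 - (1 - (Fintype.card 𝔽 : ℝ)⁻¹) ^ (Fintype.card ι - 1) := by
    refine (expect_congr rfl fun v _ => ?_).trans_le
      (expect_update_eq_zero_le α (combination P (update w l 0)) (P l) (hP.diagonal_ne_zero l) i₀)
    rw [← combination_update]
  have bound_nonneg : 0 ≤ 1 - (1 - (Fintype.card 𝔽 : ℝ)⁻¹) ^ (Fintype.card ι - 1) :=
    one_sub_one_sub_pow_nonneg (by positivity) (Nat.cast_inv_le_one _) _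
  simpa [g, prod_boole] using expect_prod_le_pow bound_nonneg g g_nonneg g_update expect_g_le univ

variable [∀ i, Fintype (G i)]

open scoped Classical in
lemma bias_le_expect_forall_eq_zero [DecidableEq κ] {χ : AddChar 𝔽 ℂ} (hχ : χ ≠ 1)
    (α : MultilinearMap 𝔽 G 𝔽) (i₀ : ι) (P : κ → ∀ i, G i) :
    bias χ α ≤ 𝔼 w : κ → ι → 𝔽,
      if ∀ l, α (update (combination P w) i₀ (P l i₀)) = 0 then (1 : ℝ) else 0 := by
  let φ (i : ι) : (κ → 𝔽) →ₗ[𝔽] G i := Fintype.linearCombination 𝔽 fun l => P l i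
  have restriction_eq_zero_iff (u : ι → κ → 𝔽) : (α.compLinearMap φ).toLinearMap u i₀ = 0 ↔
      ∀ l, α (update (combination P fun l i => u i l) i₀ (P l i₀)) = 0 := by
    have apply_single (l : κ) : (α.compLinearMap φ).toLinearMap u i₀ (Pi.single l 1) =
        α (update (combination P fun l i => u i l) i₀ (P l i₀)) := by
      rw [MultilinearMap.toLinearMap_apply, MultilinearMap.compLinearMap_apply]
      congr 1
      ext i
      rw [apply_update fun i => φ i]
      simp only [φ, Fintype.linearCombination_apply_single, one_smul]
      rfl
    simp only [LinearMap.pi_ext'_iff, LinearMap.ext_ring_iff, LinearMap.comp_apply,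
      LinearMap.single_apply, apply_single, LinearMap.zero_apply]
  calc bias χ α
      ≤ bias χ (α.compLinearMap φ) := bias_le_bias_compLinearMap hχ α φ
    _ = 𝔼 u, if (α.compLinearMap φ).toLinearMap u i₀ = 0 then (1 : ℝ) else 0 :=
      bias_eq_expect_toLinearMap_eq_zero hχ _ i₀
    _ = _ := Fintype.expect_equiv (Equiv.piComm fun _ _ => 𝔽) _ _ fun u => by
      simp only [restriction_eq_zero_iff]
      rfl

lemma IsTriangularFamily.bias_le_pow [LinearOrder κ] {χ : AddChar 𝔽 ℂ} (hχ : χ ≠ 1)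
    {α : MultilinearMap 𝔽 G 𝔽} {i₀ : ι} {P : κ → ∀ i, G i} (hP : IsTriangularFamily α i₀ P) :
    bias χ α ≤
      (1 - (1 - (Fintype.card 𝔽 : ℝ)⁻¹) ^ (Fintype.card ι - 1)) ^ Fintype.card κ := by
  classical exact (bias_le_expect_forall_eq_zero hχ α i₀ P).trans hP.expect_forall_eq_zero_le_pow

end TriangularDensity

section Forms

variable {R ι : Type*} [CommSemiring R] [Fintype ι] [DecidableEq ι] {G : ι → Type*}
  [∀ i, AddCommMonoid (G i)] [∀ i, Module R (G i)] {M : Type*} [AddCommMonoid M] [Module R M]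

lemma exists_forms_forall_piecewise_eq_zero (α : MultilinearMap R G M) (i₀ : ι) {t : ℕ}
    (P : Fin t → ∀ i, G i) :
    ∃ r ≤ (2 * t) ^ Fintype.card ι, ∃ (I : Fin r → Finset ι)
      (β : ∀ i, MultilinearMap R (fun j : ↥(I i) => G j.1) M),
      (∀ i, (I i).Nonempty ∧ i₀ ∉ I i) ∧
      ∀ x : ∀ i, G i, (∀ i, β i (fun j => x j.1) = 0) →
        ∀ S : Finset ι, S.Nonempty → i₀ ∉ S → ∀ f : ι → Fin t,
          α (S.piecewise x fun i => P (f i) i) = 0 := by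
  let T := {S : Finset ι // S.Nonempty ∧ i₀ ∉ S} × (ι → Fin t)
  let e : Fin (Fintype.card T) ≃ T := (Fintype.equivFin T).symm
  have card_le : Fintype.card T ≤ (2 * t) ^ Fintype.card ι := by
    simp only [T, Fintype.card_prod, Fintype.card_fun, Fintype.card_fin, mul_pow]
    gcongr
    exact (Fintype.card_subtype_le _).trans_eq Fintype.card_finset
  refine ⟨Fintype.card T, card_le, fun i => (e i).1.1, fun i =>
    α.domDomRestrict (· ∈ (e i).1.1) fun j => P ((e i).2 j) j, fun i => (e i).1.2, ?_⟩
  intro x hx S hS hi₀ f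
  have map_eq_zero (τ : T) : α (τ.1.1.piecewise x fun j => P (τ.2 j) j) = 0 := by
    obtain ⟨i, rfl⟩ := e.surjective τ
    exact hx i
  exact map_eq_zero (⟨S, hS, hi₀⟩, f)

end Forms

section Logarithm

lemma exists_one_sub_one_sub_pow_pow_le (m : ℕ) : ∃ N : ℕ, 0 < N ∧
    ∀ x : ℝ, 0 ≤ x → x ≤ 1 / 2 → (1 - (1 - x) ^ m) ^ N ≤ x := by
  obtain ⟨N, hN⟩ : ∃ N : ℕ, (1 - (1 / 2 : ℝ) ^ m) ^ N < 1 / (m + 1) :=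
    exists_pow_lt_of_lt_one (by positivity) (sub_lt_self 1 (by positivity))
  refine ⟨N + 1, N.succ_pos, fun x hx0 hx => ?_⟩
  have θ_nonneg : 0 ≤ 1 - (1 - x) ^ m := one_sub_one_sub_pow_nonneg hx0 (by linarith) m
  have θ_le : 1 - (1 - x) ^ m ≤ 1 - (1 / 2) ^ m := by gcongr; linarith
  have θ_le_mul : 1 - (1 - x) ^ m ≤ m * x := by
    have bernoulli := one_add_mul_le_pow (a := -x) (by linarith) m
    rw [← sub_eq_add_neg] at bernoulli
    linarith
  calc (1 - (1 - x) ^ m) ^ (N + 1)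
      = (1 - (1 - x) ^ m) ^ N * (1 - (1 - x) ^ m) := pow_succ _ _
    _ ≤ (1 - (1 / 2) ^ m) ^ N * (m * x) := by
      gcongr
      exact pow_nonneg (θ_nonneg.trans θ_le) N
    _ ≤ 1 / (m + 1) * (m * x) := by gcongr
    _ = m / (m + 1) * x := by ring
    _ ≤ 1 * x := by gcongr; exact div_le_one_of_le₀ (by linarith) (by positivity)
    _ = x := one_mul x

lemma natCast_le_mul_logb {q θ c : ℝ} {N t : ℕ} (hq : 1 < q) (hθ : 0 ≤ θ) (hθN : θ ^ N ≤ q⁻¹)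
    (hc : 0 < c) (hct : c ≤ θ ^ t) : (t : ℝ) ≤ N * Real.logb q (q * c⁻¹) := by
  have : 0 < q := one_pos.trans hq
  have pow_le : q ^ t ≤ (q * c⁻¹) ^ N := by
    have pow_le_inv : c ^ N ≤ (q ^ t)⁻¹ :=
      calc c ^ N ≤ (θ ^ t) ^ N := by gcongr
        _ = (θ ^ N) ^ t := pow_right_comm θ t N
        _ ≤ q⁻¹ ^ t := by gcongr
        _ = (q ^ t)⁻¹ := inv_pow q t
    calc q ^ t ≤ (c ^ N)⁻¹ := (le_inv_comm₀ (by positivity) (by positivity)).1 pow_le_inv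
      _ = c⁻¹ ^ N := (inv_pow c N).symm
      _ ≤ (q * c⁻¹) ^ N := by
        gcongr
        exact le_mul_of_one_le_left (by positivity) hq.le
  rw [← Real.logb_pow, Real.le_logb_iff_rpow_le hq (by positivity), Real.rpow_natCast]
  exact pow_le

end Logarithm

universe u v

theorem weak_inverse_theorem_general {ι : Type*} [Fintype ι] [DecidableEq ι] (i₀ : ι) :
    ∃ C D : ℝ, 0 < C ∧ 0 < D ∧
      ∀ (𝔽 : Type u) [Field 𝔽] [Fintype 𝔽]
        (G : ι → Type v) [∀ i, AddCommGroup (G i)] [∀ i, Module 𝔽 (G i)] [∀ i, Fintype (G i)]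
        (χ : AddChar 𝔽 ℂ), χ ≠ 1 →
      ∀ (α : MultilinearMap 𝔽 G 𝔽) (c : ℝ), 0 < c → c ≤ bias χ α →
      ∃ r : ℕ,
        (r : ℝ) ≤ C * (Real.logb (Fintype.card 𝔽) ((Fintype.card 𝔽 : ℝ) * c⁻¹)) ^ D ∧
        ∃ (I : Fin r → Finset ι)
          (β : ∀ i, MultilinearMap 𝔽 (fun j : ↥(I i) => G j.1) 𝔽),
          (∀ i, (I i).Nonempty ∧ i₀ ∉ I i) ∧
          ∀ x : ∀ i, G i, (∀ i, β i (fun j => x j.1) = 0) → α x = 0 := by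
  obtain ⟨N, N_pos, hN⟩ := exists_one_sub_one_sub_pow_pow_le (Fintype.card ι - 1)
  have card_pos : 0 < Fintype.card ι := Fintype.card_pos_iff.2 ⟨i₀⟩
  refine ⟨(2 * N) ^ Fintype.card ι, Fintype.card ι, by positivity, mod_cast card_pos, ?_⟩
  intro 𝔽 _ _ G _ _ _ χ hχ α c c_pos hc
  have one_lt_card : (1 : ℝ) < Fintype.card 𝔽 := mod_cast Fintype.one_lt_card
  have length_le (t : ℕ) (P : Fin t → ∀ i, G i) (hP : IsTriangularFamily α i₀ P) :
      (t : ℝ) ≤ N * Real.logb (Fintype.card 𝔽) ((Fintype.card 𝔽 : ℝ) * c⁻¹) := by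
    have two_le_card : (2 : ℝ) ≤ Fintype.card 𝔽 := mod_cast Fintype.one_lt_card (α := 𝔽)
    refine natCast_le_mul_logb one_lt_card
      (one_sub_one_sub_pow_nonneg (by positivity) (Nat.cast_inv_le_one _) _)
      (hN _ (by positivity) (by rw [one_div]; gcongr)) c_pos ?_
    simpa using hc.trans (hP.bias_le_pow hχ)
  obtain ⟨t, P, t_le, hP⟩ := exists_points_of_isTriangularFamily_length_le length_le
  obtain ⟨r, r_le, I, β, hI, hβ⟩ := exists_forms_forall_piecewise_eq_zero α i₀ P
  refine ⟨r, ?_, I, β, hI, fun x hx => hP x (hβ x hx)⟩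
  calc (r : ℝ) ≤ (2 * t) ^ Fintype.card ι := mod_cast r_le
    _ ≤ (2 * (N * Real.logb (Fintype.card 𝔽) ((Fintype.card 𝔽 : ℝ) * c⁻¹))) ^ Fintype.card ι := by
      gcongr
    _ = _ := by rw [Real.rpow_natCast, ← mul_assoc, mul_pow]

/-- **Weak inverse theorem for multilinear forms of low analytic rank.**
For every positive integer `k` there are constants `C, D > 0` such that for every
finite field `𝔽` with nontrivial additive character `χ`, all finite-dimensional
`𝔽`-vector spaces `G 0, …, G (k-1)`, every multilinear form `α` whose bias
`𝔼 χ(α)` is at least `c > 0` vanishes on a variety cut out by at most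
`C (log_{|𝔽|} (|𝔽| c⁻¹))^D` multilinear forms, each depending only on a nonempty
set of coordinates contained in `[k-1]` (i.e. avoiding the last coordinate). -/
theorem weak_inverse_theorem :
    ∀ k : ℕ, 0 < k → ∃ C D : ℝ, 0 < C ∧ 0 < D ∧
      ∀ (𝔽 : Type) [Field 𝔽] [Fintype 𝔽]
        (G : Fin k → Type) [∀ i, AddCommGroup (G i)] [∀ i, Module 𝔽 (G i)]
        [∀ i, Fintype (G i)] [∀ i, FiniteDimensional 𝔽 (G i)]
        (χ : AddChar 𝔽 ℂ), χ ≠ 1 →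
      ∀ (α : MultilinearMap 𝔽 G 𝔽) (c : ℝ), 0 < c →
      c ≤ (((∑ x : ∀ i, G i, χ (α x)) / (Fintype.card (∀ i, G i) : ℂ)).re) →
      ∃ r : ℕ,
        (r : ℝ) ≤ C * (Real.logb (Fintype.card 𝔽) ((Fintype.card 𝔽 : ℝ) * c⁻¹)) ^ D ∧
        ∃ (I : Fin r → Finset (Fin k))
          (β : ∀ i, MultilinearMap 𝔽 (fun j : ↥(I i) => G j.1) 𝔽),
          (∀ i, (I i).Nonempty ∧ ∀ j ∈ I i, (j : ℕ) + 1 < k) ∧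
          ∀ x : ∀ i, G i, (∀ i, β i (fun j => x j.1) = 0) → α x = 0 := by
  rintro (_ | n) k_pos
  · exact absurd k_pos (lt_irrefl 0)
  obtain ⟨C, D, hC, hD, h⟩ := weak_inverse_theorem_general (Fin.last n)
  refine ⟨C, D, hC, hD, fun 𝔽 _ _ G _ _ _ _ χ hχ α c c_pos hc => ?_⟩
  obtain ⟨r, hr, I, β, hI, hβ⟩ := h 𝔽 G χ hχ α c c_pos (hc.trans_eq (re_sum_div_card_eq_bias α))
  exact ⟨r, hr, I, β, fun i => ⟨(hI i).1, fun j hj => Nat.succ_lt_succ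
    (Fin.val_lt_last (ne_of_mem_of_not_mem hj (hI i).2))⟩, hβ⟩
end
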